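/- Let k ≥ 2, r ≥ 0 and t ≥ 2 be fixed integers, let C_s = 2^{2^{s−1}−1} · 10^{2^{s+2}−2} · (k² t⁴ (r+1)⁷)^{2^{s−1}}, let n ≥ C_1·(3t·C_t)^{2t}, and let δ ∈ [60k²(r+1)⁶t⁴/C_1, 1 − 60k²(r+1)⁶t⁴/C_1] ∪ {1}. Let F ⊆ C([n],k) have size |F| = Σ_{i=t}^{t+r−1} C(n−i, k−t) + δ·C(n−(t+r), k−t) and satisfy I(F) = MI(F). If F contains no full t-star, then there exists an element x0 ∈ [n] such that x0 ∈ F for all F ∈ F. -/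

import Mathlib

open Finset

/-- The total intersection of a family: `I(F) = ∑_{A∈F} ∑_{B∈F} |A ∩ B|`. -/
def totalInt (F : Finset (Finset ℕ)) : ℕ :=
  ∑ A ∈ F, ∑ B ∈ F, (A ∩ B).card

/-- The degree of a set `S` in the family `F`: the number of members of `F` containing `S`. -/
def degF (F : Finset (Finset ℕ)) (S : Finset ℕ) : ℕ :=
  (F.filter fun A => S ⊆ A).card

/-- `A` strictly precedes `B` in the lexicographic order on finite sets of positive integers:
the minimal element of the symmetric difference `A Δ B` belongs to `A`. -/
def lexLt (A B : Finset ℕ) : Prop :=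
  ∃ m ∈ A \ B, ∀ x ∈ (A \ B) ∪ (B \ A), m ≤ x

/-- `S` is an initial segment (prefix) of the `k`-element subsets of `[n] = {1,…,n}`
under the lexicographic order. -/
def IsLexPrefix (n k : ℕ) (S : Finset (Finset ℕ)) : Prop :=
  S ⊆ (Icc 1 n).powersetCard k ∧
    ∀ A ∈ S, ∀ B ∈ (Icc 1 n).powersetCard k, lexLt B A → B ∈ S

/-- The cardinality of the family `L_{n,k,t}^{(r)}`:
`C(n−t+1, k−t+1) − C(n−(t+r−1), k−t+1)`. -/
def lexStarCard (n k t r : ℕ) : ℕ :=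
  (n - t + 1).choose (k - t + 1) - (n - (t + r - 1)).choose (k - t + 1)

/-- The full `t`-star with core `Y`: all `k`-subsets of `[n]` containing `Y`. -/
def fullStar (n k : ℕ) (Y : Finset ℕ) : Finset (Finset ℕ) :=
  ((Icc 1 n).powersetCard k).filter fun A => Y ⊆ A

/-- The constant `C_s = 2^{2^{s−1}−1} · 10^{2^{s+2}−2} · (k² t⁴ (r+1)⁷)^{2^{s−1}}`. -/
def Cconst (k t r s : ℕ) : ℕ :=
  2 ^ (2 ^ (s - 1) - 1) * 10 ^ (2 ^ (s + 2) - 2) * (k ^ 2 * t ^ 4 * (r + 1) ^ 7) ^ (2 ^ (s - 1))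

/-!
For a set `S` put `w(S) = ∑_{B ∈ F} |S ∩ B|`. Exchanging one member of an optimal family that
contains no full `t`-star shows `w(Y) ≤ w(A)` for every `t`-set `Y` and every member `A`. Only
elements of large degree contribute noticeably to these sums, and almost every member contains at
most `t` of them. So if no element is common to all members, an element `x` of largest degree
together with the large-degree elements of a typical member avoiding `x` spans a `(t + 1)`-set
which every member meets in at least `t` elements. Comparing `I(F)` with a family formed by `r`
full `t`-stars through `{1, …, t - 1}` and part of another one then forces `r ≥ t`. For `r > t`
the `(t + 1)`-set leaves too little room for `|F|`; for `r = t` and `δ < 1` the comparison is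
already strict, and for `δ = 1` the second-order terms of the two total intersections decide.
-/

section Binomials

theorem choose_succ_le_choose_sub_add (m i j : ℕ) :
    m.choose (j + 1) ≤ (m - i).choose (j + 1) + i * (m - 1).choose j := by
  induction i with
  | zero => simp
  | succ i ih =>
    have hstep : (m - i).choose (j + 1) ≤ (m - (i + 1)).choose (j + 1) + (m - 1).choose j := by
      rcases Nat.eq_zero_or_pos (m - i) with h | h
      · simp [h]
      · obtain ⟨l, hl⟩ := Nat.exists_eq_add_of_lt h
        rw [show m - i = l + 1 by lia, show m - (i + 1) = l by lia, Nat.choose_succ_succ, add_comm]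
        gcongr
        lia
    lia

theorem choose_sub_add_le_choose_succ {m i : ℕ} (j : ℕ) (hi : i ≤ m) :
    (m - i).choose (j + 1) + i * (m - i).choose j ≤ m.choose (j + 1) := by
  obtain ⟨l, rfl⟩ := Nat.exists_eq_add_of_le' hi
  rw [Nat.add_sub_cancel]
  clear hi
  induction i with
  | zero => simp
  | succ i ih =>
    have hmono : l.choose j ≤ (l + i).choose j := Nat.choose_le_choose j (l.le_add_right i)
    rw [← add_assoc, Nat.choose_succ_succ]
    lia

theorem mul_choose_le_mul_choose_sub (m i j : ℕ) :
    m * m.choose j ≤ m * (m - i).choose j + i * j * m.choose j := by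
  rcases m with _ | m
  · simp
  rcases j with _ | j
  · simp
  have hdrop := choose_succ_le_choose_sub_add (m + 1) i j
  have habsorb := Nat.add_one_mul_choose_eq m j
  rw [Nat.add_sub_cancel] at hdrop
  calc (m + 1) * (m + 1).choose (j + 1)
      ≤ (m + 1) * ((m + 1 - i).choose (j + 1) + i * m.choose j) := by gcongr
    _ = (m + 1) * (m + 1 - i).choose (j + 1) + i * ((m + 1) * m.choose j) := by ring
    _ = _ := by rw [habsorb]; ring

theorem mul_choose_le_sum_choose_sub (m j r : ℕ) :
    r * m.choose (j + 1) ≤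
      ∑ i ∈ range r, (m - i).choose (j + 1) + r.choose 2 * (m - 1).choose j := by
  rw [← smul_eq_mul r, ← card_range r, ← sum_const, card_range, Nat.choose_two_right,
    ← sum_range_id, sum_mul, ← sum_add_distrib]
  exact sum_le_sum fun i _ => choose_succ_le_choose_sub_add m i j

theorem sum_choose_sub_add_le_mul_choose {m r : ℕ} (j : ℕ) (hr : r ≤ m) :
    ∑ i ∈ range r, (m - i).choose (j + 1) + r.choose 2 * (m - r).choose j ≤
      r * m.choose (j + 1) := by
  rw [← smul_eq_mul r, ← card_range r, ← sum_const, card_range, Nat.choose_two_right,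
    ← sum_range_id, sum_mul, ← sum_add_distrib]
  refine sum_le_sum fun i hi => ?_
  have hir := mem_range.1 hi
  refine le_trans ?_ (choose_sub_add_le_choose_succ j (hir.le.trans hr))
  gcongr

theorem choose_pred_succ_mul {m j : ℕ} (hm : 1 ≤ m) :
    m * (m - 1).choose j = (j + 1) * m.choose (j + 1) := by
  obtain ⟨m, rfl⟩ := Nat.exists_eq_add_of_le' hm
  rw [Nat.add_sub_cancel, Nat.add_one_mul_choose_eq, mul_comm]

theorem mul_choose_pred_le {m i j : ℕ} (hi : 1 ≤ i) :
    m * (m - 1).choose j ≤ m * (m - 1 - i).choose j + i * (j + 1) * (m - 1).choose j := by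
  have h := mul_choose_le_mul_choose_sub (m - 1) i j
  rcases m with _ | m
  · simp
  rw [Nat.add_sub_cancel] at h ⊢
  nlinarith

end Binomials

section Counting

theorem card_filter_subset_disjoint_powersetCard {α : Type*} [DecidableEq α] {V Y Z : Finset α}
    {k : ℕ} (hY : Y ⊆ V) (hZ : Z ⊆ V) (hYZ : Disjoint Z Y) (hk : #Y ≤ k) :
    #{A ∈ V.powersetCard k | Y ⊆ A ∧ Disjoint Z A} = (#V - #Z - #Y).choose (k - #Y) := by
  have hreduce : {A ∈ V.powersetCard k | Y ⊆ A ∧ Disjoint Z A}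
      = {A ∈ (V \ Z).powersetCard k | Y ⊆ A} := by
    ext A
    simp only [mem_filter, mem_powersetCard, subset_sdiff, disjoint_comm (a := Z)]
    tauto
  rw [hreduce, card_filter_powersetCard_subset Y (V \ Z) k (subset_sdiff.2 ⟨hY, hYZ.symm⟩) hk,
    card_sdiff_of_subset hZ]

variable {n k : ℕ} {F : Finset (Finset ℕ)}

theorem card_fullStar {Y : Finset ℕ} (hY : Y ⊆ Icc 1 n) (hk : #Y ≤ k) :
    #(fullStar n k Y) = (n - #Y).choose (k - #Y) := by
  rw [fullStar, card_filter_powersetCard_subset Y _ k hY hk, Nat.card_Icc, Nat.add_sub_cancel]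

theorem degF_le_choose (hF : F ⊆ (Icc 1 n).powersetCard k) {Y : Finset ℕ} (hY : Y ⊆ Icc 1 n)
    (hk : #Y ≤ k) : degF F Y ≤ (n - #Y).choose (k - #Y) :=
  card_fullStar hY hk ▸ card_le_card (filter_subset_filter _ hF)

theorem card_le_card_mul_choose (hF : F ⊆ (Icc 1 n).powersetCard k) {𝒮 : Finset (Finset ℕ)} {s : ℕ}
    (h𝒮 : 𝒮 ⊆ (Icc 1 n).powersetCard s) (hs : s ≤ k) (hcover : ∀ A ∈ F, ∃ S ∈ 𝒮, S ⊆ A) :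
    #F ≤ #𝒮 * (n - s).choose (k - s) := by
  have hunion : F ⊆ 𝒮.biUnion fun S => F.filter (S ⊆ ·) := fun A hA => by
    obtain ⟨S, hS, hSA⟩ := hcover A hA
    exact mem_biUnion.2 ⟨S, hS, mem_filter.2 ⟨hA, hSA⟩⟩
  refine (card_le_card hunion).trans (card_biUnion_le_card_mul _ _ _ fun S hS => ?_)
  obtain ⟨hSn, hScard⟩ := mem_powersetCard.1 (h𝒮 hS)
  subst hScard
  exact degF_le_choose hF hSn hs

end Counting

section TotalIntersection

/-- `setInt F S = ∑_{B ∈ F} |S ∩ B|`, the contribution of the set `S` to the total intersection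
of `F` when `S ∈ F`. -/
def setInt (F : Finset (Finset ℕ)) (S : Finset ℕ) : ℕ :=
  ∑ B ∈ F, #(S ∩ B)

variable {F : Finset (Finset ℕ)} {V S T : Finset ℕ}

theorem totalInt_eq_sum_setInt (F : Finset (Finset ℕ)) : totalInt F = ∑ A ∈ F, setInt F A := rfl

theorem degF_singleton (F : Finset (Finset ℕ)) (x : ℕ) : degF F {x} = #{A ∈ F | x ∈ A} := by
  simp only [degF, singleton_subset_iff]

theorem degF_le_card (F : Finset (Finset ℕ)) (S : Finset ℕ) : degF F S ≤ #F :=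
  card_filter_le _ _

theorem setInt_eq_sum_degF (F : Finset (Finset ℕ)) (S : Finset ℕ) :
    setInt F S = ∑ x ∈ S, degF F {x} := by
  simp only [setInt, degF_singleton, ← filter_mem_eq_inter]
  exact (sum_card_bipartiteAbove_eq_sum_card_bipartiteBelow (· ∈ ·)).symm

theorem setInt_mono (F : Finset (Finset ℕ)) (h : S ⊆ T) : setInt F S ≤ setInt F T :=
  sum_le_sum fun _ _ => card_le_card (inter_subset_inter_right h)

theorem setInt_insert {x : ℕ} (hx : x ∉ S) :
    setInt F (insert x S) = degF F {x} + setInt F S := by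
  simp only [setInt_eq_sum_degF, sum_insert hx]

theorem setInt_union_add_setInt_inter (F : Finset (Finset ℕ)) (S T : Finset ℕ) :
    setInt F (S ∪ T) + setInt F (S ∩ T) = setInt F S + setInt F T := by
  simp only [setInt_eq_sum_degF, sum_union_inter]

theorem setInt_le_card_mul {D : ℕ} (h : ∀ x ∈ S, degF F {x} ≤ D) : setInt F S ≤ #S * D := by
  rw [setInt_eq_sum_degF, ← smul_eq_mul]
  exact sum_le_card_nsmul _ _ _ h

theorem sum_sum_eq_sum_degF_mul {R : Type*} [CommSemiring R] (hV : ∀ A ∈ F, A ⊆ V) (f : ℕ → R) :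
    ∑ A ∈ F, ∑ x ∈ A, f x = ∑ x ∈ V, degF F {x} * f x := by
  calc ∑ A ∈ F, ∑ x ∈ A, f x = ∑ x ∈ V, ∑ A ∈ F with x ∈ A, f x :=
        sum_comm' fun A x => by
          simp only [mem_filter]
          exact ⟨fun h => ⟨⟨h.1, h.2⟩, hV A h.1 h.2⟩, fun h => h.1⟩
    _ = _ := by simp only [degF_singleton, sum_const, nsmul_eq_mul]

theorem totalInt_eq_sum_degF_sq (hV : ∀ A ∈ F, A ⊆ V) :
    totalInt F = ∑ x ∈ V, degF F {x} ^ 2 := by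
  simp only [totalInt_eq_sum_setInt, setInt_eq_sum_degF, sum_sum_eq_sum_degF_mul hV, sq,
    Nat.cast_id]

theorem sum_degF_eq_mul_card {k : ℕ} (hF : F ⊆ V.powersetCard k) :
    ∑ x ∈ V, degF F {x} = k * #F := by
  rw [← setInt_eq_sum_degF, setInt, sum_congr rfl fun B hB => by
    rw [inter_eq_right.2 (mem_powersetCard.1 (hF hB)).1, (mem_powersetCard.1 (hF hB)).2],
    sum_const, smul_eq_mul, mul_comm]

theorem totalInt_insert {B : Finset ℕ} (hB : B ∉ F) :
    totalInt (insert B F) = totalInt F + 2 * setInt F B + #B := by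
  simp only [totalInt_eq_sum_setInt, setInt, sum_insert hB, sum_add_distrib, inter_self,
    inter_comm _ B]
  ring

theorem setInt_le_of_isMax {𝒰 : Finset (Finset ℕ)} (hF : F ⊆ 𝒰)
    (hopt : ∀ G ⊆ 𝒰, #G = #F → totalInt G ≤ totalInt F) {A B : Finset ℕ} (hA : A ∈ F)
    (hB : B ∈ 𝒰) (hBF : B ∉ F) (hAB : #A = #B) : setInt F B ≤ setInt F A := by
  obtain ⟨E, hAE, rfl⟩ : ∃ E, A ∉ E ∧ insert A E = F :=
    ⟨F.erase A, notMem_erase A F, insert_erase hA⟩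
  have hBE : B ∉ E := fun h => hBF (mem_insert_of_mem h)
  have hexchange := hopt (insert B E)
    (insert_subset hB ((subset_insert A E).trans hF))
    (by rw [card_insert_of_notMem hBE, card_insert_of_notMem hAE])
  rw [totalInt_insert hAE, totalInt_insert hBE] at hexchange
  have hinter : #(B ∩ A) ≤ #A := card_le_card inter_subset_right
  simp only [setInt, sum_insert hAE, inter_self] at hexchange ⊢
  lia

end TotalIntersection

section HeavyElements

/-- The elements of `V` whose degree in `F` is at least `η|F|/k`: the ones that matter for the
total intersection of a family of `k`-sets, up to an error `η|F|` per member. -/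
noncomputable def heavy (V : Finset ℕ) (k : ℕ) (η : ℝ) (F : Finset (Finset ℕ)) : Finset ℕ :=
  {x ∈ V | η * #F ≤ k * degF F {x}}

variable {V : Finset ℕ} {k t : ℕ} {η : ℝ} {F : Finset (Finset ℕ)}

theorem heavy_subset : heavy V k η F ⊆ V := filter_subset _ _

theorem card_heavy_mul_le (hF : F ⊆ V.powersetCard k) (hne : F.Nonempty) :
    #(heavy V k η F) * η ≤ k ^ 2 := by
  have hM : (0 : ℝ) < #F := by exact_mod_cast hne.card_pos
  refine le_of_mul_le_mul_right ?_ hM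
  calc #(heavy V k η F) * η * #F
      = ∑ _x ∈ heavy V k η F, η * (#F : ℝ) := by rw [sum_const, nsmul_eq_mul, mul_assoc]
    _ ≤ ∑ x ∈ heavy V k η F, (k * degF F {x} : ℝ) := sum_le_sum fun x hx => (mem_filter.1 hx).2
    _ ≤ ∑ x ∈ V, (k * degF F {x} : ℝ) :=
      sum_le_sum_of_subset_of_nonneg heavy_subset fun _ _ _ => by positivity
    _ = (k : ℝ) ^ 2 * #F := by
      rw [← mul_sum, sq, mul_assoc]
      exact_mod_cast congrArg (k * ·) (sum_degF_eq_mul_card hF)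

theorem setInt_le_setInt_inter_heavy_add (hη : 0 ≤ η) {A : Finset ℕ} (hA : A ∈ V.powersetCard k) :
    (setInt F A : ℝ) ≤ setInt F (A ∩ heavy V k η F) + η * #F := by
  obtain ⟨hAV, rfl⟩ := mem_powersetCard.1 hA
  have hlight : ∀ x ∈ A \ heavy V #A η F, #A * (degF F {x} : ℝ) ≤ η * #F := fun x hx => by
    obtain ⟨hxA, hxH⟩ := mem_sdiff.1 hx
    rw [heavy, mem_filter, not_and, not_le] at hxH
    exact (hxH (hAV hxA)).le
  have hsum : (∑ x ∈ A \ heavy V #A η F, degF F {x} : ℝ) ≤ η * #F := by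
    rcases A.eq_empty_or_nonempty with rfl | hAne
    · simpa using by positivity
    have hpos : (0 : ℝ) < #A := by exact_mod_cast hAne.card_pos
    refine le_of_mul_le_mul_left ?_ hpos
    calc #A * (∑ x ∈ A \ heavy V #A η F, degF F {x} : ℝ)
        ≤ #(A \ heavy V #A η F) * (η * #F) := by
          rw [mul_sum, ← nsmul_eq_mul]; exact sum_le_card_nsmul _ _ _ hlight
      _ ≤ #A * (η * #F) := by gcongr; exact sdiff_subset
  rw [setInt_eq_sum_degF, setInt_eq_sum_degF, ← sum_inter_add_sum_sdiff A (heavy V #A η F)]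
  push_cast
  gcongr

theorem setInt_le_mul_card_add (hF : F ⊆ V.powersetCard k) (t : ℕ) (S : Finset ℕ) :
    setInt F S ≤ t * #F + k * #{A ∈ F | t < #(A ∩ S)} := by
  calc setInt F S ≤ ∑ A ∈ F, (t + if t < #(A ∩ S) then k else 0) := sum_le_sum fun A hA => by
        have hk : #(A ∩ S) ≤ k := (mem_powersetCard.1 (hF hA)).2 ▸ card_le_card inter_subset_left
        rw [inter_comm]
        split_ifs <;> lia
    _ = _ := by rw [sum_add_distrib, ← sum_filter, sum_const, sum_const, smul_eq_mul, smul_eq_mul,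
        mul_comm, mul_comm k]

theorem setInt_heavy_le (hF : F ⊆ V.powersetCard k)
    (hfew : k * #{A ∈ F | t < #(A ∩ heavy V k η F)} ≤ η * #F) :
    (setInt F (heavy V k η F) : ℝ) ≤ (t + η) * #F := by
  have h : (setInt F (heavy V k η F) : ℝ) ≤ t * #F + k * #{A ∈ F | t < #(A ∩ heavy V k η F)} := by
    exact_mod_cast setInt_le_mul_card_add hF t _
  linarith

theorem totalInt_le_of_setInt_le (hF : F ⊆ V.powersetCard k) (hη : 0 ≤ η) (htV : t ≤ #V)
    (hfew : k * #{A ∈ F | t < #(A ∩ heavy V k η F)} ≤ η * #F) {W : ℝ}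
    (hW : ∀ Y ∈ V.powersetCard t, setInt F Y ≤ W) :
    (totalInt F : ℝ) ≤ (W + 2 * η * #F) * #F := by
  have hW0 : 0 ≤ W := by
    obtain ⟨Y, hY⟩ := powersetCard_nonempty.2 htV
    exact (Nat.cast_nonneg _).trans (hW Y hY)
  have hbound : ∀ A ∈ F, (setInt F A : ℝ)
      ≤ W + η * #F + if t < #(A ∩ heavy V k η F) then k * (#F : ℝ) else 0 := fun A hA => by
    split_ifs with hAt
    · have hk : (setInt F A : ℝ) ≤ k * #F := by
        rw [← (mem_powersetCard.1 (hF hA)).2]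
        exact_mod_cast setInt_le_card_mul fun x _ => degF_le_card F {x}
      linarith [show (0 : ℝ) ≤ η * #F by positivity]
    · obtain ⟨Y, hAY, hYV, hYt⟩ := exists_subsuperset_card_eq
        (inter_subset_right.trans heavy_subset) (not_lt.1 hAt) htV
      have hmono : (setInt F (A ∩ heavy V k η F) : ℝ) ≤ setInt F Y := by
        exact_mod_cast setInt_mono F hAY
      linarith [setInt_le_setInt_inter_heavy_add hη (F := F) (hF hA),
        hW Y (mem_powersetCard.2 ⟨hYV, hYt⟩)]
  calc (totalInt F : ℝ) = ∑ A ∈ F, (setInt F A : ℝ) := by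
        rw [totalInt_eq_sum_setInt, Nat.cast_sum]
    _ ≤ ∑ A ∈ F, (W + η * #F + if t < #(A ∩ heavy V k η F) then k * (#F : ℝ) else 0) :=
      sum_le_sum hbound
    _ = (W + η * #F) * #F + k * #{A ∈ F | t < #(A ∩ heavy V k η F)} * #F := by
      rw [sum_add_distrib, ← sum_filter, sum_const, sum_const, nsmul_eq_mul, nsmul_eq_mul]
      ring
    _ ≤ (W + η * #F) * #F + η * #F * #F := by gcongr
    _ = _ := by ring

theorem degF_add_le_of_notMem (hF : F ⊆ V.powersetCard k) (hη : 0 ≤ η)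
    (hfew : k * #{A ∈ F | t < #(A ∩ heavy V k η F)} ≤ η * #F) {x : ℕ} (hx : x ∈ heavy V k η F)
    {A : Finset ℕ} (hA : A ∈ F) (hxA : x ∉ A) :
    (degF F {x} : ℝ) + setInt F A ≤ (t + 2 * η) * #F := by
  have hinsert : degF F {x} + setInt F (A ∩ heavy V k η F) ≤ setInt F (heavy V k η F) := by
    rw [← setInt_insert fun h => hxA (mem_of_mem_inter_left h)]
    exact setInt_mono F (insert_subset hx inter_subset_right)
  have hinsert' : (degF F {x} : ℝ) + setInt F (A ∩ heavy V k η F) ≤ setInt F (heavy V k η F) := by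
    exact_mod_cast hinsert
  linarith [setInt_le_setInt_inter_heavy_add hη (F := F) (hF hA), setInt_heavy_le hF hfew]

end HeavyElements

section Core

variable {V : Finset ℕ} {k t : ℕ} {η : ℝ} {F : Finset (Finset ℕ)}

theorem exists_notMem_card_inter_le {S : Finset ℕ} {x : ℕ}
    (h : #{A ∈ F | t < #(A ∩ S)} + degF F {x} < #F) : ∃ A ∈ F, x ∉ A ∧ #(A ∩ S) ≤ t := by
  by_contra! hcon
  have hcover : F ⊆ {A ∈ F | t < #(A ∩ S)} ∪ {A ∈ F | x ∈ A} := fun A hA => by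
    by_cases hx : x ∈ A
    · exact mem_union_right _ (mem_filter.2 ⟨hA, hx⟩)
    · exact mem_union_left _ (mem_filter.2 ⟨hA, hcon A hA hx⟩)
  have hcard := (card_le_card hcover).trans (card_union_le _ _)
  rw [← degF_singleton] at hcard
  lia

theorem setInt_add_setInt_le_of_card_inter_le (hF : F ⊆ V.powersetCard k) (hη : 0 ≤ η)
    (hfew : k * #{A ∈ F | t < #(A ∩ heavy V k η F)} ≤ η * #F) {A T : Finset ℕ} (hA : A ∈ F)
    (hT : T ⊆ heavy V k η F) {D s : ℕ} (hD : ∀ x ∈ T, degF F {x} ≤ D) (hs : #(A ∩ T) ≤ s) :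
    (setInt F A + setInt F T : ℝ) ≤ (t + 2 * η) * #F + s * D := by
  have hsub : setInt F (A ∩ heavy V k η F) + setInt F T ≤ setInt F (heavy V k η F) + s * D := by
    rw [← setInt_union_add_setInt_inter]
    have hinter : setInt F (A ∩ heavy V k η F ∩ T) ≤ #(A ∩ heavy V k η F ∩ T) * D :=
      setInt_le_card_mul fun x hx => hD x (mem_of_mem_inter_right hx)
    have hcard : #(A ∩ heavy V k η F ∩ T) ≤ s :=
      (card_le_card (inter_subset_inter_right inter_subset_left)).trans hs
    exact add_le_add (setInt_mono F (union_subset inter_subset_right hT))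
      (hinter.trans (Nat.mul_le_mul_right D hcard))
  have hsub' : (setInt F (A ∩ heavy V k η F) + setInt F T : ℝ)
      ≤ setInt F (heavy V k η F) + s * D := by exact_mod_cast hsub
  linarith [setInt_le_setInt_inter_heavy_add hη (F := F) (hF hA), setInt_heavy_le hF hfew]

theorem heavy_nonempty (hF : F ⊆ V.powersetCard k) (hη : 0 ≤ η) {A : Finset ℕ} (hA : A ∈ F)
    (hw : η * #F < setInt F A) : (heavy V k η F).Nonempty := by
  by_contra! hempty
  have h := setInt_le_setInt_inter_heavy_add hη (F := F) (hF hA)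
  rw [hempty, inter_empty, setInt_eq_sum_degF F ∅, sum_empty] at h
  push_cast at h
  linarith

theorem exists_max_degF_notMem (hF : F ⊆ V.powersetCard k) (hη : 0 ≤ η) {c W : ℝ}
    (hηc : 5 * η < c) (hk : 0 < k) (ht : 1 ≤ t) (hne : F.Nonempty)
    (hfew : k * #{A ∈ F | t < #(A ∩ heavy V k η F)} ≤ η * #F)
    (hW : ∀ A ∈ F, W ≤ setInt F A) (hWlow : (t - 1 + c - 2 * η) * #F ≤ W)
    (hno : ∀ x ∈ V, ∃ A ∈ F, x ∉ A) :
    ∃ x ∈ heavy V k η F, ∃ B ∈ F, x ∉ B ∧ #(B ∩ heavy V k η F) ≤ t ∧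
      (∀ y ∈ heavy V k η F, degF F {y} ≤ degF F {x}) ∧
      (degF F {x} : ℝ) ≤ (1 - c + 4 * η) * #F := by
  have hM : (0 : ℝ) < #F := by exact_mod_cast hne.card_pos
  have hk' : (1 : ℝ) ≤ k := by exact_mod_cast hk
  have ht' : (1 : ℝ) ≤ t := by exact_mod_cast ht
  obtain ⟨A, hA⟩ := hne
  obtain ⟨x, hxH, hxmax⟩ := exists_max_image _ (fun x => degF F {x})
    (heavy_nonempty hF hη hA (by nlinarith [hW A hA]))
  have hdeg : (degF F {x} : ℝ) ≤ (1 - c + 4 * η) * #F := by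
    obtain ⟨A', hA', hxA'⟩ := hno x (heavy_subset hxH)
    linarith [degF_add_le_of_notMem hF hη hfew hxH hA' hxA', hW A' hA']
  have hatypical : (#{A ∈ F | t < #(A ∩ heavy V k η F)} : ℝ) ≤ η * #F :=
    (le_mul_of_one_le_left (Nat.cast_nonneg _) hk').trans hfew
  obtain ⟨B, hB, hxB, hBt⟩ := exists_notMem_card_inter_le (F := F) (S := heavy V k η F) (t := t)
    (x := x) <| by
      rw [← Nat.cast_lt (α := ℝ), Nat.cast_add]
      nlinarith
  exact ⟨x, hxH, B, hB, hxB, hBt, hxmax, hdeg⟩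

-- If `A` met `insert x (B ∩ heavy)` in fewer than `t` elements, submodularity on the heavy set
-- would bound `setInt F A + setInt F B` by less than `2W`.
theorem le_card_inter_insert_heavy (hF : F ⊆ V.powersetCard k) (hη : 0 ≤ η) {c W : ℝ}
    (hηc : 5 * η < c) (ht : 2 ≤ t)
    (hfew : k * #{A ∈ F | t < #(A ∩ heavy V k η F)} ≤ η * #F)
    (hW : ∀ A ∈ F, W ≤ setInt F A) (hWlow : (t - 1 + c - 2 * η) * #F ≤ W) {x : ℕ}
    (hx : x ∈ heavy V k η F) (hxmax : ∀ y ∈ heavy V k η F, degF F {y} ≤ degF F {x})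
    (hdeg : (degF F {x} : ℝ) ≤ (1 - c + 4 * η) * #F) {A B : Finset ℕ} (hA : A ∈ F) (hB : B ∈ F)
    (hxB : x ∉ B) : t ≤ #(A ∩ insert x (B ∩ heavy V k η F)) := by
  have ht' : (2 : ℝ) ≤ t := by exact_mod_cast ht
  have hM : (0 : ℝ) < #F := by exact_mod_cast card_pos.2 ⟨A, hA⟩
  have hTH : insert x (B ∩ heavy V k η F) ⊆ heavy V k η F := insert_subset hx inter_subset_right
  by_contra! hlt
  have hadd := setInt_add_setInt_le_of_card_inter_le hF hη hfew hA hTH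
    (fun y hy => hxmax y (hTH hy)) (Nat.le_sub_one_of_lt hlt)
  rw [setInt_insert fun h => hxB (mem_of_mem_inter_left h), Nat.cast_sub (by lia)] at hadd
  push_cast at hadd
  have h2W : 2 * W ≤ (t - 2) * degF F {x} + (t + 3 * η) * #F := by
    linarith [setInt_le_setInt_inter_heavy_add hη (F := F) (hF hB), hW A hA, hW B hB]
  have hdeg' : (t - 2) * degF F {x} ≤ (t - 2) * ((1 - c + 4 * η) * #F) := by gcongr
  have htc : 0 < t * (c - 5 * η) := by nlinarith
  have htη : 0 ≤ (t + 1) * η := by positivity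
  linarith [mul_pos htc hM, mul_nonneg htη hM.le]

theorem exists_core (hF : F ⊆ V.powersetCard k) (hη : 0 ≤ η) {c W : ℝ} (hηc : 5 * η < c)
    (hk : 0 < k) (ht : 2 ≤ t) (htV : t + 1 ≤ #V) (hne : F.Nonempty)
    (hfew : k * #{A ∈ F | t < #(A ∩ heavy V k η F)} ≤ η * #F)
    (hW : ∀ A ∈ F, W ≤ setInt F A) (hWt : ∀ Y ∈ V.powersetCard t, setInt F Y ≤ W)
    (hI : (t - 1 + c) * (#F : ℝ) ^ 2 ≤ totalInt F) (hno : ∀ x ∈ V, ∃ A ∈ F, x ∉ A) :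
    (t + 1) * c ≤ 1 + (4 * t + 3) * η ∧ ∃ T ∈ V.powersetCard (t + 1), ∀ A ∈ F, t ≤ #(A ∩ T) := by
  have hM : (0 : ℝ) < #F := by exact_mod_cast hne.card_pos
  have hWlow : (t - 1 + c - 2 * η) * #F ≤ W := by
    have h := totalInt_le_of_setInt_le hF hη (by lia) hfew hWt
    nlinarith
  obtain ⟨x, hxH, B, hB, hxB, hBt, hxmax, hdeg⟩ :=
    exists_max_degF_notMem hF hη hηc hk (by lia) hne hfew hW hWlow hno
  refine ⟨?_, ?_⟩
  · have hBH : (setInt F (B ∩ heavy V k η F) : ℝ) ≤ t * degF F {x} := by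
      exact_mod_cast (setInt_le_card_mul fun y hy => hxmax y (mem_of_mem_inter_right hy)).trans
        (Nat.mul_le_mul_right _ hBt)
    refine le_of_mul_le_mul_right ?_ hM
    nlinarith [hW B hB, setInt_le_setInt_inter_heavy_add hη (F := F) (hF hB)]
  · obtain ⟨T, hsub, hTV, hTcard⟩ := exists_subsuperset_card_eq
      ((insert_subset hxH inter_subset_right).trans heavy_subset)
      ((card_insert_le x (B ∩ heavy V k η F)).trans (Nat.succ_le_succ hBt)) htV
    exact ⟨T, mem_powersetCard.2 ⟨hTV, hTcard⟩, fun A hA =>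
      (le_card_inter_insert_heavy hF hη hηc ht hfew hW hWlow hxH hxmax hdeg hA hB hxB).trans
        (card_le_card (inter_subset_inter_left hsub))⟩

end Core

section LexFamily

/-- The family `L_{n,k,t}^{(r)}` of all `k`-subsets of `[n]` that contain `{1, …, t - 1}` and meet
`{t, …, t + r - 1}`. It is an initial segment of the lexicographic order, namely the union of the
first `r` full `t`-stars. -/
def lexFamily (n k t r : ℕ) : Finset (Finset ℕ) :=
  {A ∈ (Icc 1 n).powersetCard k | Ico 1 t ⊆ A ∧ ¬Disjoint (Ico t (t + r)) A}

variable {n k t r : ℕ} {G : Finset (Finset ℕ)}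

theorem lexFamily_subset : lexFamily n k t r ⊆ (Icc 1 n).powersetCard k := filter_subset _ _

theorem Ico_subset_of_mem_lexFamily {A : Finset ℕ} (hA : A ∈ lexFamily n k t r) : Ico 1 t ⊆ A :=
  (mem_filter.1 hA).2.1

theorem lexFamily_subset_succ : lexFamily n k t r ⊆ lexFamily n k t (r + 1) := fun A hA => by
  simp only [lexFamily, mem_filter] at hA ⊢
  exact ⟨hA.1, hA.2.1, fun h => hA.2.2 (h.mono_left (Ico_subset_Ico_right (by lia)))⟩

theorem lexFamily_succ_sdiff : lexFamily n k t (r + 1) \ lexFamily n k t r =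
    {A ∈ (Icc 1 n).powersetCard k | insert (t + r) (Ico 1 t) ⊆ A ∧ Disjoint (Ico t (t + r)) A} := by
  ext A
  have hsplit : Ico t (t + (r + 1)) = insert (t + r) (Ico t (t + r)) := by
    rw [← add_assoc, Nat.Ico_succ_right_eq_insert_Ico (by lia)]
  simp only [lexFamily, mem_sdiff, mem_filter, hsplit, disjoint_insert_left, insert_subset_iff]
  tauto

theorem card_lexFamily_succ_sdiff (ht : 1 ≤ t) (htk : t ≤ k) (hn : t + r ≤ n) :
    #(lexFamily n k t (r + 1) \ lexFamily n k t r) = (n - (t + r)).choose (k - t) := by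
  have hcard : #(insert (t + r) (Ico 1 t)) = t := by
    rw [card_insert_of_notMem (by simp), Nat.card_Ico]
    lia
  rw [lexFamily_succ_sdiff, card_filter_subset_disjoint_powersetCard, hcard]
  · simp only [Nat.card_Icc, Nat.card_Ico]
    congr 1
    lia
  · intro x
    simp only [mem_insert, mem_Ico, mem_Icc]
    lia
  · intro x
    simp only [mem_Ico, mem_Icc]
    lia
  · rw [disjoint_left]
    simp only [mem_insert, mem_Ico]
    lia
  · lia

theorem card_lexFamily (ht : 1 ≤ t) (htk : t ≤ k) (hn : t + r ≤ n + 1) :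
    #(lexFamily n k t r) = ∑ i ∈ Ico t (t + r), (n - i).choose (k - t) := by
  induction r with
  | zero => simp [lexFamily]
  | succ r ih =>
    rw [← add_assoc, sum_Ico_succ_top (by lia), ← ih (by lia),
      ← card_lexFamily_succ_sdiff ht htk (by lia), add_comm #(lexFamily n k t r),
      card_sdiff_add_card_eq_card lexFamily_subset_succ]

theorem choose_le_card_lexFamily (ht : 1 ≤ t) (htk : t ≤ k) (hr : 1 ≤ r) (hn : t + r ≤ n + 1) :
    (n - t).choose (k - t) ≤ #(lexFamily n k t r) := by
  rw [card_lexFamily ht htk hn]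
  exact single_le_sum (f := fun i => (n - i).choose (k - t)) (fun _ _ => Nat.zero_le _)
    (mem_Ico.2 ⟨le_rfl, by lia⟩)

theorem card_lexFamily_le_mul_choose (ht : 1 ≤ t) (htk : t ≤ k) (hn : t + r ≤ n + 1) :
    #(lexFamily n k t r) ≤ r * (n - t).choose (k - t) := by
  rw [card_lexFamily ht htk hn]
  refine (sum_le_card_nsmul _ _ _ fun i hi => Nat.choose_le_choose _
    (Nat.sub_le_sub_left (mem_Ico.1 hi).1 n)).trans_eq ?_
  rw [Nat.card_Ico, Nat.add_sub_cancel_left, smul_eq_mul]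

theorem mul_choose_le_card_lexFamily (ht : 1 ≤ t) (htk : t ≤ k) (hn : t + r ≤ n + 1) :
    r * (n - (t + r)).choose (k - t) ≤ #(lexFamily n k t r) := by
  rw [card_lexFamily ht htk hn]
  refine Eq.trans_le ?_ (card_nsmul_le_sum _ _ _ fun i hi => Nat.choose_le_choose _
    (Nat.sub_le_sub_left (mem_Ico.1 hi).2.le n))
  rw [Nat.card_Ico, Nat.add_sub_cancel_left, smul_eq_mul]

theorem degF_of_lexFamily_subset (ht : 1 ≤ t) (htk : t ≤ k) (hn : t + r ≤ n + 1)
    (hLG : lexFamily n k t r ⊆ G) (hG : G ⊆ (Icc 1 n).powersetCard k)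
    (hpre : ∀ A ∈ G, Ico 1 t ⊆ A) {x : ℕ} (hx : x ∈ Ico t (t + r)) :
    degF G {x} = (n - t).choose (k - t) := by
  obtain ⟨htx, hxr⟩ := mem_Ico.1 hx
  have hcard : #(insert x (Ico 1 t)) = t := by
    rw [card_insert_of_notMem (by simp [htx]), Nat.card_Ico]
    lia
  have hstar : {A ∈ G | {x} ⊆ A} = fullStar n k (insert x (Ico 1 t)) := by
    ext A
    simp only [fullStar, mem_filter, singleton_subset_iff, insert_subset_iff]
    constructor
    · exact fun ⟨hA, hxA⟩ => ⟨hG hA, hxA, hpre A hA⟩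
    · exact fun ⟨hA, hxA, hpreA⟩ =>
        ⟨hLG (mem_filter.2 ⟨hA, hpreA, not_disjoint_iff.2 ⟨x, hx, hxA⟩⟩), hxA⟩
  rw [degF, hstar, card_fullStar _ (hcard.trans_le htk), hcard]
  intro y
  simp only [mem_insert, mem_Ico, mem_Icc]
  lia

theorem sum_Icc_of_lexFamily_subset (ht : 1 ≤ t) (htk : t ≤ k) (hn : t + r ≤ n + 1)
    (hLG : lexFamily n k t r ⊆ G) (hG : G ⊆ (Icc 1 n).powersetCard k)
    (hpre : ∀ A ∈ G, Ico 1 t ⊆ A) (f : ℕ → ℕ) :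
    ∑ x ∈ Icc 1 n, f (degF G {x}) = (t - 1) * f #G + r * f ((n - t).choose (k - t)) +
      ∑ x ∈ Ico (t + r) (n + 1), f (degF G {x}) := by
  have hlow : ∀ x ∈ Ico 1 t, f (degF G {x}) = f #G := fun x hx => by
    rw [degF, filter_true_of_mem fun A hA => singleton_subset_iff.2 (hpre A hA hx)]
  have hmid : ∀ x ∈ Ico t (t + r), f (degF G {x}) = f ((n - t).choose (k - t)) := fun x hx => by
    rw [degF_of_lexFamily_subset ht htk hn hLG hG hpre hx]
  rw [← Ico_add_one_right_eq_Icc, ← sum_Ico_consecutive _ ht (show t ≤ n + 1 by lia),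
    ← sum_Ico_consecutive _ (show t ≤ t + r by lia) hn, sum_congr rfl hlow, sum_congr rfl hmid]
  simp only [sum_const, Nat.card_Ico, smul_eq_mul, Nat.add_sub_cancel_left, add_assoc]

theorem exists_le_totalInt_of_card (ht : 1 ≤ t) (htk : t ≤ k) (hn : t + r ≤ n) {M : ℕ}
    (hM : #(lexFamily n k t r) ≤ M)
    (hM' : M ≤ #(lexFamily n k t r) + (n - (t + r)).choose (k - t)) :
    ∃ G ⊆ (Icc 1 n).powersetCard k, #G = M ∧
      (t - 1) * M ^ 2 + r * (n - t).choose (k - t) ^ 2 + (M - #(lexFamily n k t r)) ^ 2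
        ≤ totalInt G := by
  rw [← card_lexFamily_succ_sdiff ht htk hn, add_comm,
    card_sdiff_add_card_eq_card lexFamily_subset_succ] at hM'
  obtain ⟨G, hLG, hGL, hcard⟩ := exists_subsuperset_card_eq lexFamily_subset_succ hM hM'
  have hG : G ⊆ (Icc 1 n).powersetCard k := hGL.trans lexFamily_subset
  refine ⟨G, hG, hcard, ?_⟩
  have hlast : M - #(lexFamily n k t r) ≤ degF G {t + r} := by
    rw [← hcard, ← card_sdiff_of_subset hLG, degF]
    refine card_le_card fun A hA => ?_
    have hA' := sdiff_subset_sdiff hGL (Subset.refl _) hA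
    rw [lexFamily_succ_sdiff, mem_filter, insert_subset_iff] at hA'
    exact mem_filter.2 ⟨(mem_sdiff.1 hA).1, singleton_subset_iff.2 hA'.2.1.1⟩
  rw [totalInt_eq_sum_degF_sq fun A hA => (mem_powersetCard.1 (hG hA)).1,
    sum_Icc_of_lexFamily_subset ht htk (by lia) hLG hG
      (fun A hA => Ico_subset_of_mem_lexFamily (hGL hA)) (· ^ 2), hcard]
  have hterm : degF G {t + r} ^ 2 ≤ ∑ x ∈ Ico (t + r) (n + 1), degF G {x} ^ 2 :=
    single_le_sum (f := fun x => degF G {x} ^ 2) (fun _ _ => Nat.zero_le _)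
      (mem_Ico.2 ⟨le_rfl, by lia⟩)
  gcongr
  exact (Nat.pow_le_pow_left hlast 2).trans hterm

end LexFamily

section AlmostStar

variable {n k t : ℕ} {F : Finset (Finset ℕ)} {T : Finset ℕ}

theorem exists_mem_powersetCard_subset {A : Finset ℕ} (h : t ≤ #(A ∩ T)) :
    ∃ Y ∈ T.powersetCard t, Y ⊆ A := by
  obtain ⟨Y, hY, hYt⟩ := exists_subset_card_eq h
  exact ⟨Y, mem_powersetCard.2 ⟨hY.trans inter_subset_right, hYt⟩, hY.trans inter_subset_left⟩

theorem card_le_of_le_card_inter (hF : F ⊆ (Icc 1 n).powersetCard k) (htk : t ≤ k)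
    (hT : T ∈ (Icc 1 n).powersetCard (t + 1)) (hFT : ∀ A ∈ F, t ≤ #(A ∩ T)) :
    #F ≤ (t + 1) * (n - t).choose (k - t) := by
  obtain ⟨hTn, hTcard⟩ := mem_powersetCard.1 hT
  have h := card_le_card_mul_choose hF (powersetCard_mono hTn) htk fun A hA =>
    exists_mem_powersetCard_subset (hFT A hA)
  rwa [card_powersetCard, hTcard, Nat.choose_succ_self_right] at h

theorem setInt_of_le_card_inter (hTcard : #T = t + 1) (hFT : ∀ A ∈ F, t ≤ #(A ∩ T)) :
    setInt F T = t * #F + degF F T := by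
  have hterm : ∀ A ∈ F, #(T ∩ A) = t + if T ⊆ A then 1 else 0 := fun A hA => by
    split_ifs with hTA
    · rw [inter_eq_left.2 hTA, hTcard]
    · have hlt : #(T ∩ A) < #T :=
        card_lt_card ⟨inter_subset_left, fun h => hTA (h.trans inter_subset_right)⟩
      have hle := hFT A hA
      rw [inter_comm] at hle
      lia
  rw [setInt, sum_congr rfl hterm, sum_add_distrib, sum_const, smul_eq_mul, mul_comm,
    ← card_filter, degF]

theorem card_le_degF_add (hF : F ⊆ (Icc 1 n).powersetCard k) (htk : t ≤ k)
    (hT : T ∈ (Icc 1 n).powersetCard (t + 1)) (hFT : ∀ A ∈ F, t ≤ #(A ∩ T)) {x : ℕ} (hx : x ∈ T) :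
    #F ≤ degF F {x} + (n - (t + 1)).choose (k - t) := by
  obtain ⟨hTn, hTcard⟩ := mem_powersetCard.1 hT
  have herase : #(T.erase x) = t := by rw [card_erase_of_mem hx, hTcard, Nat.add_sub_cancel]
  have hmiss : {A ∈ F | x ∉ A} ⊆
      {A ∈ (Icc 1 n).powersetCard k | T.erase x ⊆ A ∧ Disjoint {x} A} := fun A hA => by
    obtain ⟨hAF, hxA⟩ := mem_filter.1 hA
    refine mem_filter.2 ⟨hF hAF, ?_, disjoint_singleton_left.2 hxA⟩
    have hsub : A ∩ T ⊆ T.erase x := fun y hy =>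
      mem_erase.2 ⟨fun h => hxA (h ▸ mem_of_mem_inter_left hy), mem_of_mem_inter_right hy⟩
    rw [← eq_of_subset_of_card_le hsub (herase.trans_le (hFT A hAF))]
    exact inter_subset_left
  have hcard := card_le_card hmiss
  rw [card_filter_subset_disjoint_powersetCard ((erase_subset x T).trans hTn)
    (singleton_subset_iff.2 (hTn hx)) (disjoint_singleton_left.2 (notMem_erase x T))
    (herase.trans_le htk), herase, Nat.card_Icc, card_singleton, Nat.add_sub_cancel,
    Nat.sub_sub, add_comm 1] at hcard
  rw [← card_filter_add_card_filter_not (s := F) (x ∈ ·), degF_singleton]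
  gcongr

theorem degF_le_of_notMem (hF : F ⊆ (Icc 1 n).powersetCard k) (htk : t < k)
    (hT : T ∈ (Icc 1 n).powersetCard (t + 1)) (hFT : ∀ A ∈ F, t ≤ #(A ∩ T)) {x : ℕ}
    (hx : x ∈ Icc 1 n \ T) : degF F {x} ≤ (t + 1) * (n - (t + 1)).choose (k - (t + 1)) := by
  obtain ⟨hTn, hTcard⟩ := mem_powersetCard.1 hT
  obtain ⟨hxn, hxT⟩ := mem_sdiff.1 hx
  have himage : (T.powersetCard t).image (insert x) ⊆ (Icc 1 n).powersetCard (t + 1) := by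
    refine image_subset_iff.2 fun Y hY => ?_
    obtain ⟨hYT, hYt⟩ := mem_powersetCard.1 hY
    refine mem_powersetCard.2 ⟨insert_subset hxn (hYT.trans hTn), ?_⟩
    rw [card_insert_of_notMem fun h => hxT (hYT h), hYt]
  have hcover := card_le_card_mul_choose (F := F.filter ({x} ⊆ ·)) ((filter_subset _ _).trans hF)
    himage htk fun A hA => by
      obtain ⟨hAF, hxA⟩ := mem_filter.1 hA
      obtain ⟨Y, hY, hYA⟩ := exists_mem_powersetCard_subset (hFT A hAF)
      exact ⟨insert x Y, mem_image_of_mem _ hY, insert_subset (singleton_subset_iff.1 hxA) hYA⟩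
  have hcard : #((T.powersetCard t).image (insert x)) ≤ t + 1 := by
    rw [← Nat.choose_succ_self_right t, ← hTcard, ← card_powersetCard]
    exact card_image_le
  exact hcover.trans (Nat.mul_le_mul_right _ hcard)

theorem sum_degF_sq_le (hF : F ⊆ (Icc 1 n).powersetCard k) (htk : t < k)
    (hT : T ∈ (Icc 1 n).powersetCard (t + 1)) (hFT : ∀ A ∈ F, t ≤ #(A ∩ T)) {N₀ N' : ℝ}
    (hN₀ : N₀ = (n - (t + 1)).choose (k - t)) (hN' : N' = (n - (t + 1)).choose (k - (t + 1)))
    (hM : N₀ ≤ 2 * #F) :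
    (∑ x ∈ T, degF F {x} ^ 2 : ℝ) ≤ (t - 1) * #F ^ 2 + N₀ * #F + N' * (2 * #F - N₀) := by
  obtain ⟨hTn, hTcard⟩ := mem_powersetCard.1 hT
  have hdegT : (degF F T : ℝ) ≤ N' := by
    have h := degF_le_choose hF hTn (hTcard.trans_le htk)
    rw [hTcard] at h
    exact hN' ▸ Nat.cast_le.2 h
  have hsum : (∑ x ∈ T, degF F {x} : ℝ) = t * #F + degF F T := by
    exact_mod_cast setInt_eq_sum_degF F T ▸ setInt_of_le_card_inter hTcard hFT
  have hpoint : ∀ x ∈ T,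
      (degF F {x} : ℝ) ^ 2 ≤ (N₀ * #F - #F ^ 2) + (2 * #F - N₀) * degF F {x} := fun x hx => by
    have hlow : (#F : ℝ) ≤ degF F {x} + N₀ := by
      rw [hN₀]
      exact_mod_cast card_le_degF_add hF htk.le hT hFT hx
    have hup : (degF F {x} : ℝ) ≤ #F := Nat.cast_le.2 (degF_le_card F _)
    linarith [mul_nonneg (sub_nonneg.2 hup) (sub_nonneg.2 (sub_le_iff_le_add'.2 hlow))]
  calc (∑ x ∈ T, degF F {x} ^ 2 : ℝ)
      ≤ ∑ x ∈ T, ((N₀ * #F - (#F : ℝ) ^ 2) + (2 * #F - N₀) * degF F {x}) := sum_le_sum hpoint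
    _ = (t - 1) * #F ^ 2 + N₀ * #F + degF F T * (2 * #F - N₀) := by
      rw [sum_add_distrib, sum_const, nsmul_eq_mul, ← mul_sum, hsum, hTcard]
      push_cast
      ring
    _ ≤ _ := by gcongr

theorem sum_sdiff_degF_sq_le (hF : F ⊆ (Icc 1 n).powersetCard k) (htk : t < k)
    (hT : T ∈ (Icc 1 n).powersetCard (t + 1)) (hFT : ∀ A ∈ F, t ≤ #(A ∩ T)) :
    ∑ x ∈ Icc 1 n \ T, degF F {x} ^ 2 ≤
      (t + 1) * (n - (t + 1)).choose (k - (t + 1)) * ((k - t) * #F) := by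
  obtain ⟨hTn, hTcard⟩ := mem_powersetCard.1 hT
  have hsum : ∑ x ∈ Icc 1 n \ T, degF F {x} ≤ (k - t) * #F := by
    have htotal := sum_sdiff (f := fun x => degF F {x}) hTn
    rw [sum_degF_eq_mul_card hF, ← setInt_eq_sum_degF F T,
      setInt_of_le_card_inter hTcard hFT] at htotal
    rw [Nat.sub_mul]
    lia
  calc ∑ x ∈ Icc 1 n \ T, degF F {x} ^ 2
      ≤ ∑ x ∈ Icc 1 n \ T, (t + 1) * (n - (t + 1)).choose (k - (t + 1)) * degF F {x} :=
        sum_le_sum fun x hx => by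
          rw [sq]
          exact Nat.mul_le_mul_right _ (degF_le_of_notMem hF htk hT hFT hx)
    _ ≤ _ := by rw [← mul_sum]; gcongr

theorem totalInt_le_of_le_card_inter (hF : F ⊆ (Icc 1 n).powersetCard k) (htk : t < k)
    (hT : T ∈ (Icc 1 n).powersetCard (t + 1)) (hFT : ∀ A ∈ F, t ≤ #(A ∩ T)) {N₀ N' : ℝ}
    (hN₀ : N₀ = (n - (t + 1)).choose (k - t)) (hN' : N' = (n - (t + 1)).choose (k - (t + 1)))
    (hM : N₀ ≤ 2 * #F) :
    (totalInt F : ℝ) ≤ (t - 1) * #F ^ 2 + N₀ * #F + N' * (2 * #F - N₀) +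
      (t + 1) * N' * ((k - t) * #F) := by
  have hlight : (∑ x ∈ Icc 1 n \ T, degF F {x} ^ 2 : ℝ) ≤ (t + 1) * N' * ((k - t) * #F) := by
    rw [hN', ← Nat.cast_sub htk.le]
    exact_mod_cast sum_sdiff_degF_sq_le hF htk hT hFT
  rw [totalInt_eq_sum_degF_sq fun A hA => (mem_powersetCard.1 (hF hA)).1,
    ← sum_sdiff (mem_powersetCard.1 hT).1]
  push_cast
  linarith [sum_degF_sq_le hF htk hT hFT hN₀ hN' hM]

end AlmostStar

section Comparison

theorem le_totalInt_lexFamily {n k t r : ℕ} (ht : 1 ≤ t) (htk : t ≤ k) (hr : 1 ≤ r)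
    (hn : t + r ≤ n) {M N : ℝ} (hM : M = #(lexFamily n k t r)) (hN : N = (n - t).choose (k - t)) :
    (t - 1) * M ^ 2 + r * N ^ 2 + ((k - t + 1) * M - r * N) ^ 2 / (n - t) ≤
      totalInt (lexFamily n k t r) := by
  set L := lexFamily n k t r
  have hsplit := sum_Icc_of_lexFamily_subset ht htk (by lia) (Subset.refl L) lexFamily_subset
    fun _ => Ico_subset_of_mem_lexFamily
  have hsum : ((k - t + 1) * M - r * N : ℝ) = ∑ x ∈ Ico (t + r) (n + 1), (degF L {x} : ℝ) := by
    have h := hsplit id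
    simp only [id, sum_degF_eq_mul_card (F := L) lexFamily_subset] at h
    rify [ht] at h
    rw [← hM, ← hN] at h
    linarith
  have htn : (0 : ℝ) < n - t := sub_pos.2 (by exact_mod_cast (by lia : t < n))
  have hlight : ((k - t + 1) * M - r * N) ^ 2 / (n - t) ≤
      ∑ x ∈ Ico (t + r) (n + 1), (degF L {x} : ℝ) ^ 2 := by
    rw [hsum, div_le_iff₀' htn]
    refine sq_sum_le_card_mul_sum_sq.trans ?_
    gcongr
    rw [Nat.card_Ico, ← Nat.cast_sub (by lia), Nat.cast_le]
    lia
  have hsq := hsplit (· ^ 2)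
  rw [← totalInt_eq_sum_degF_sq fun A hA => (mem_powersetCard.1 (lexFamily_subset hA)).1] at hsq
  rify [ht] at hsq
  rw [← hM, ← hN] at hsq
  linarith

-- With `N₀ = (1 - u)N`, `N' = uN` and `M = (t + 1)N - e`, where `u = (k - t)/(n - t)`, this is the
-- gain of the lexicographic family on the heavy elements.
theorem mul_le_heavy_gain {t u N M e τ : ℝ} (hu : 0 ≤ u) (hN : 0 ≤ N) (he : 0 ≤ e)
    (hτ : t + 1 ≤ τ) (heτ : τ * (u * N) * (1 - t * u) ≤ e) (hM : M = (t + 1) * N - e) :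
    u * N ^ 2 * (1 - (τ * t + 1) * u) ≤
      (t + 1) * N ^ 2 - (1 - u) * N * M - u * N * (2 * M - (1 - u) * N) := by
  have hNe : N * (τ * (u * N) * (1 - t * u)) ≤ N * e := by gcongr
  have huNe : 0 ≤ u * N * e := by positivity
  have hτN : (t + 1) * (u * N ^ 2) ≤ τ * (u * N ^ 2) := by gcongr
  subst hM
  linarith

theorem light_loss_le {t s u N M e τ ν : ℝ} (hu : 0 ≤ u) (hN : 0 ≤ N) (ht : 0 ≤ t) (hs : 0 ≤ s)
    (he : 0 ≤ e) (hν : 0 < ν) (huν : u * ν = s) (heτ : e ≤ τ * (u * N))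
    (hM : M = (t + 1) * N - e) :
    (t + 1) * (u * N) * (s * M) - (s * M - e) ^ 2 / ν ≤
      u * N ^ 2 * ((s + 2) * (t + 1) * τ * u) := by
  have hsq : s * u * M ^ 2 - 2 * u * (M * e) ≤ (s * M - e) ^ 2 / ν := by
    rw [le_div_iff₀ hν, ← huν]
    linarith [sq_nonneg e]
  have hMe : M * e ≤ (t + 1) * N * (τ * (u * N)) := by
    have hMN : M ≤ (t + 1) * N := by linarith
    gcongr
  calc (t + 1) * (u * N) * (s * M) - (s * M - e) ^ 2 / ν
      ≤ (t + 1) * (u * N) * (s * M) - (s * u * M ^ 2 - 2 * u * (M * e)) := by gcongr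
    _ = (s + 2) * u * (M * e) := by subst hM; ring
    _ ≤ (s + 2) * u * ((t + 1) * N * (τ * (u * N))) := by gcongr
    _ = _ := by ring

theorem error_coeff_lt_one {t s u τ : ℝ} (ht : 2 ≤ t) (hs : 1 ≤ s) (hu : 0 ≤ u)
    (hτ0 : 0 ≤ τ) (hτ : τ ≤ t ^ 2) (hsmall : 100 * s * t ^ 4 * u ≤ 1) :
    (τ * t + 1 + (s + 2) * (t + 1) * τ) * u < 1 := by
  have ht3 : 8 ≤ t ^ 3 := by
    calc (8 : ℝ) = 2 ^ 3 := by norm_num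
      _ ≤ t ^ 3 := by gcongr
  have hst : t ^ 3 ≤ s * t ^ 3 := le_mul_of_one_le_left (by linarith) hs
  have hst4 : s * t ^ 3 * 2 ≤ s * t ^ 3 * t := by gcongr
  have hcoeff : τ * t + 1 + (s + 2) * (t + 1) * τ ≤ 50 * s * t ^ 4 := by
    calc τ * t + 1 + (s + 2) * (t + 1) * τ
        ≤ t ^ 2 * t + 1 + (3 * s) * (2 * t) * t ^ 2 := by gcongr <;> linarith
      _ ≤ 50 * s * t ^ 4 := by linarith
  linarith [mul_le_mul_of_nonneg_right hcoeff hu]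

theorem card_lexFamily_add_le_mul_choose {n k t r : ℕ} (ht : 1 ≤ t) (htk : t < k)
    (hn : t + r ≤ n) : #(lexFamily n k t r) + r.choose 2 * (n - t - r).choose (k - (t + 1)) ≤
      r * (n - t).choose (k - t) := by
  obtain ⟨j, hj⟩ : ∃ j, k - t = j + 1 := ⟨k - t - 1, by lia⟩
  have h := sum_choose_sub_add_le_mul_choose j (by lia : r ≤ n - t)
  rw [card_lexFamily ht htk.le (by lia), sum_Ico_eq_sum_range, Nat.add_sub_cancel_left]
  simp only [← Nat.sub_sub, hj, Nat.add_sub_cancel] at h ⊢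
  exact h

theorem ratio_mul_choose {n k t : ℕ} {u : ℝ} (htk : t < k) (htn : t < n)
    (hu : u * (n - t) = k - t) :
    u * (n - t).choose (k - t) = (n - (t + 1)).choose (k - (t + 1)) := by
  have hν : (0 : ℝ) < n - t := sub_pos.2 (by exact_mod_cast htn)
  have h := choose_pred_succ_mul (j := k - (t + 1)) (show 1 ≤ n - t by lia)
  rw [show k - (t + 1) + 1 = k - t by lia, Nat.sub_sub] at h
  rify [htk.le, htn.le] at h
  rw [← hu] at h
  exact mul_left_cancel₀ hν.ne' (by linarith)

theorem mul_choose_sub_card_lexFamily_le {n k t r : ℕ} {u : ℝ} (ht : 1 ≤ t) (htk : t < k)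
    (htn : t < n) (hn : t + r ≤ n + 1) (hu : u * (n - t) = k - t) :
    r * (n - t).choose (k - t) - #(lexFamily n k t r) ≤
      r.choose 2 * (u * (n - t).choose (k - t)) := by
  obtain ⟨j, hj⟩ : ∃ j, k - t = j + 1 := ⟨k - t - 1, by lia⟩
  have h : r * (n - t).choose (k - t) ≤
      #(lexFamily n k t r) + r.choose 2 * (n - (t + 1)).choose (k - (t + 1)) := by
    rw [card_lexFamily ht htk.le hn, sum_Ico_eq_sum_range, Nat.add_sub_cancel_left]
    simp only [← Nat.sub_sub, hj, Nat.add_sub_cancel]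
    exact mul_choose_le_sum_choose_sub (n - t) j r
  rw [ratio_mul_choose htk htn hu, sub_le_iff_le_add']
  exact_mod_cast h

theorem one_sub_ratio_mul_choose {n k t : ℕ} {u : ℝ} (htk : t < k) (htn : t < n)
    (hu : u * (n - t) = k - t) :
    (1 - u) * (n - t).choose (k - t) = (n - (t + 1)).choose (k - t) := by
  rw [sub_mul, ratio_mul_choose htk htn hu, one_mul, sub_eq_iff_eq_add',
    show n - t = n - (t + 1) + 1 by lia, show k - t = k - (t + 1) + 1 by lia,
    Nat.choose_succ_succ, Nat.cast_add]

theorem le_mul_choose_sub_card_lexFamily {n k t r : ℕ} {u : ℝ} (ht : 1 ≤ t) (htk : t < k)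
    (hr : 2 ≤ r) (hn : t + r ≤ n) (hu : u * (n - t) = k - t) :
    r.choose 2 * (u * (n - t).choose (k - t)) * (1 - (r - 1) * u) ≤
      r * (n - t).choose (k - t) - #(lexFamily n k t r) := by
  have hν : (0 : ℝ) < n - t := sub_pos.2 (by exact_mod_cast (by lia : t < n))
  have hdrop : (n - t) * (n - (t + 1)).choose (k - (t + 1)) ≤
      (n - t) * (n - t - r).choose (k - (t + 1)) +
        (r - 1) * (k - t) * (n - (t + 1)).choose (k - (t + 1)) := by
    have h := mul_choose_pred_le (m := n - t) (j := k - (t + 1)) (show 1 ≤ r - 1 by lia)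
    rwa [Nat.sub_sub n, show n - (t + 1) - (r - 1) = n - t - r by lia,
      show k - (t + 1) + 1 = k - t by lia] at h
  rify [htk.le, (by lia : t ≤ n), (by lia : 1 ≤ r)] at hdrop
  rw [← ratio_mul_choose htk (by lia) hu, ← hu] at hdrop
  have hdrop' : u * (n - t).choose (k - t) * (1 - (r - 1) * u) ≤
      (n - t - r).choose (k - (t + 1)) := le_of_mul_le_mul_left (by linarith) hν
  have hcard : (#(lexFamily n k t r) + r.choose 2 * (n - t - r).choose (k - (t + 1)) : ℝ) ≤
      r * (n - t).choose (k - t) := by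
    exact_mod_cast card_lexFamily_add_le_mul_choose ht htk hn
  rw [mul_assoc]
  linarith [mul_le_mul_of_nonneg_left hdrop' (Nat.cast_nonneg (α := ℝ) (r.choose 2))]

theorem almostStar_bound_lt_lex_bound {t s u N M e τ ν : ℝ} (ht : 2 ≤ t) (hs : 1 ≤ s) (hu : 0 < u)
    (hN : 0 < N) (he : 0 ≤ e) (hν : 0 < ν) (huν : u * ν = s) (hsmall : 100 * s * t ^ 4 * u ≤ 1)
    (hτ : t + 1 ≤ τ) (hτt : τ ≤ t ^ 2) (heτ : e ≤ τ * (u * N))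
    (hτe : τ * (u * N) * (1 - t * u) ≤ e) (hM : M = (t + 1) * N - e) :
    (1 - u) * N * M + u * N * (2 * M - (1 - u) * N) + (t + 1) * (u * N) * (s * M) <
      (t + 1) * N ^ 2 + (s * M - e) ^ 2 / ν := by
  have hgain := mul_le_heavy_gain hu.le hN.le he hτ hτe hM
  have hloss := light_loss_le hu.le hN.le (by linarith) (by linarith) he hν huν heτ hM
  have herror := error_coeff_lt_one ht hs hu.le (by linarith) hτt hsmall
  have hlt : u * N ^ 2 * ((τ * t + 1 + (s + 2) * (t + 1) * τ) * u) < u * N ^ 2 :=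
    mul_lt_of_lt_one_right (by positivity) herror
  linarith

theorem exists_small_ratio {n k t : ℕ} (ht : 1 ≤ t) (htk : t < k)
    (hn : 100 * k ^ 2 * t ^ 4 + t ≤ n) :
    ∃ u : ℝ, 0 < u ∧ u * (n - t) = k - t ∧ 100 * (k - t) * t ^ 4 * u ≤ 1 := by
  have ht' : (1 : ℝ) ≤ t := by exact_mod_cast ht
  have hs : (0 : ℝ) < k - t := sub_pos.2 (by exact_mod_cast htk)
  have hn' : (100 * k ^ 2 * t ^ 4 + t : ℝ) ≤ n := by exact_mod_cast hn
  have hν : 100 * (k - t) ^ 2 * t ^ 4 ≤ (n - t : ℝ) := by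
    calc 100 * (k - t : ℝ) ^ 2 * t ^ 4 ≤ 100 * k ^ 2 * t ^ 4 := by gcongr; linarith
      _ ≤ (n - t : ℝ) := by linarith
  have hν0 : (0 : ℝ) < n - t := lt_of_lt_of_le (by positivity) hν
  refine ⟨(k - t) / (n - t), by positivity, div_mul_cancel₀ _ hν0.ne', ?_⟩
  rw [mul_div_assoc', div_le_one₀ hν0]
  linarith

theorem almostStar_bound_lt_lexFamily_bound {n k t : ℕ} {u N M : ℝ} (ht : 2 ≤ t) (htk : t < k)
    (hkn : k + t + 1 ≤ n) (htn : t + (t + 1) ≤ n) (hu0 : 0 < u) (hu : u * (n - t) = k - t)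
    (hsmall : 100 * (k - t) * t ^ 4 * u ≤ 1) (hN : N = (n - t).choose (k - t))
    (hM : M = #(lexFamily n k t (t + 1))) :
    (1 - u) * N * M + u * N * (2 * M - (1 - u) * N) + (t + 1) * (u * N) * ((k - t) * M) <
      (t + 1) * N ^ 2 + ((k - t) * M - ((t + 1) * N - M)) ^ 2 / (n - t) := by
  have ht' : (2 : ℝ) ≤ t := by exact_mod_cast ht
  have hs : (1 : ℝ) ≤ k - t := le_sub_iff_add_le'.2 (by exact_mod_cast htk)
  have hν0 : (0 : ℝ) < n - t := sub_pos.2 (by exact_mod_cast (by lia : t < n))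
  have hN0 : 0 < N := hN ▸ Nat.cast_pos.2 (Nat.choose_pos (by lia))
  have hτ : ((t + 1).choose 2 : ℝ) = (t + 1) * t / 2 := by
    rw [Nat.cast_choose_two]
    push_cast
    ring
  have hMN : M ≤ (t + 1) * N := by
    rw [hM, hN]
    exact_mod_cast card_lexFamily_le_mul_choose (by lia) htk.le (by lia : t + (t + 1) ≤ n + 1)
  have hlow := mul_choose_sub_card_lexFamily_le (by lia) htk (by lia)
    (by lia : t + (t + 1) ≤ n + 1) hu
  have hdefect := le_mul_choose_sub_card_lexFamily (by lia) htk (by lia : 2 ≤ t + 1) htn hu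
  rw [← hN, ← hM] at hlow hdefect
  push_cast at hlow hdefect
  exact almostStar_bound_lt_lex_bound (τ := (t + 1).choose 2) ht' hs hu0 hN0 (by linarith) hν0 hu
    hsmall (by rw [hτ]; nlinarith) (by rw [hτ]; nlinarith) hlow (by linarith) (by ring)

theorem totalInt_lt_totalInt_lexFamily {n k t : ℕ} (ht : 2 ≤ t) (htk : t < k)
    (hn : 100 * k ^ 2 * t ^ 4 + t ≤ n) {F : Finset (Finset ℕ)} {T : Finset ℕ}
    (hF : F ⊆ (Icc 1 n).powersetCard k) (hT : T ∈ (Icc 1 n).powersetCard (t + 1))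
    (hFT : ∀ A ∈ F, t ≤ #(A ∩ T)) (hcard : #F = #(lexFamily n k t (t + 1))) :
    totalInt F < totalInt (lexFamily n k t (t + 1)) := by
  have hkn : k + t + (t + 1) ≤ n := by
    have : 2 ^ 4 * t ^ 2 ≤ t ^ 4 * k ^ 2 :=
      Nat.mul_le_mul (Nat.pow_le_pow_left ht 4) (Nat.pow_le_pow_left htk.le 2)
    nlinarith [Nat.pow_le_pow_left ht 4, Nat.le_self_pow two_ne_zero k]
  obtain ⟨u, hu0, hu, hsmall⟩ := exists_small_ratio (by lia) htk hn
  obtain ⟨N, hN⟩ : ∃ N : ℝ, N = (n - t).choose (k - t) := ⟨_, rfl⟩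
  obtain ⟨M, hM⟩ : ∃ M : ℝ, M = #(lexFamily n k t (t + 1)) := ⟨_, rfl⟩
  have hN' : u * N = (n - (t + 1)).choose (k - (t + 1)) := hN ▸ ratio_mul_choose htk (by lia) hu
  have hN₀ : (1 - u) * N = (n - (t + 1)).choose (k - t) :=
    hN ▸ one_sub_ratio_mul_choose htk (by lia) hu
  have hNM : N ≤ M := by
    rw [hM, hN]
    exact_mod_cast choose_le_card_lexFamily (by lia) htk.le (by lia) (by lia)
  have : 0 ≤ M := hM ▸ Nat.cast_nonneg _
  have hupper := totalInt_le_of_le_card_inter hF htk hT hFT hN₀ hN' (by rw [hcard, ← hM]; nlinarith)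
  have hlower := le_totalInt_lexFamily (by lia) htk.le (by lia) (by lia) hM hN
  have hlt := almostStar_bound_lt_lexFamily_bound ht htk (by lia) (by lia) hu0 hu hsmall hN hM
  rw [hcard, ← hM] at hupper
  push_cast at hlower
  rw [show (k - t + 1) * M - (t + 1) * N = (k - t) * M - ((t + 1) * N - M) by ring] at hlower
  rify
  linarith

end Comparison

section Optimal

variable {n k t r C : ℕ} {δ : ℝ} {F : Finset (Finset ℕ)}

theorem setInt_le_setInt_of_not_exists_fullStar_subset (hF : F ⊆ (Icc 1 n).powersetCard k)
    (hopt : ∀ G ⊆ (Icc 1 n).powersetCard k, #G = #F → totalInt G ≤ totalInt F)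
    (hnostar : ¬∃ Y ∈ (Icc 1 n).powersetCard t, fullStar n k Y ⊆ F) {Y : Finset ℕ}
    (hY : Y ∈ (Icc 1 n).powersetCard t) {A : Finset ℕ} (hA : A ∈ F) :
    setInt F Y ≤ setInt F A := by
  obtain ⟨B, hB, hBF⟩ := not_subset.1 fun hsub => hnostar ⟨Y, hY, hsub⟩
  obtain ⟨hBn, hYB⟩ := mem_filter.1 hB
  have hAB : #A = #B := (mem_powersetCard.1 (hF hA)).2.trans (mem_powersetCard.1 hBn).2.symm
  exact (setInt_mono F hYB).trans (setInt_le_of_isMax hF hopt hA hBn hBF hAB)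

theorem lt_of_not_exists_fullStar_subset (hF : F ⊆ (Icc 1 n).powersetCard k) (hne : F.Nonempty)
    (htn : t ≤ n) (hnostar : ¬∃ Y ∈ (Icc 1 n).powersetCard t, fullStar n k Y ⊆ F) : t < k := by
  by_contra! hkt
  obtain ⟨A, hA⟩ := hne
  obtain ⟨hAn, hAk⟩ := mem_powersetCard.1 (hF hA)
  obtain ⟨Y, hAY, hYn, hYt⟩ := exists_subsuperset_card_eq hAn (hAk.trans_le hkt)
    (by rwa [Nat.card_Icc, Nat.add_sub_cancel])
  refine hnostar ⟨Y, mem_powersetCard.2 ⟨hYn, hYt⟩, fun B hB => ?_⟩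
  obtain ⟨hBn, hYB⟩ := mem_filter.1 hB
  have hAB : A = B := eq_of_subset_of_card_le (hAY.trans hYB)
    ((mem_powersetCard.1 hBn).2.trans hAk.symm).le
  exact hAB ▸ hA

theorem mul_card_filter_lt_card_inter_heavy_le (hF : F ⊆ (Icc 1 n).powersetCard k)
    (hne : F.Nonempty) (htk : t < k) (hC : 0 < C) (hn : k ^ (2 * t + 4) * C ^ (t + 3) + t ≤ n)
    (hM : (n - t).choose (k - t) ≤ C * #F) :
    (k * #{A ∈ F | t < #(A ∩ heavy (Icc 1 n) k (C : ℝ)⁻¹ F)} : ℝ) ≤ (C : ℝ)⁻¹ * #F := by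
  have hk : 0 < k := t.zero_le.trans_lt htk
  have hC' : (0 : ℝ) < C := by exact_mod_cast hC
  set H := heavy (Icc 1 n) k (C : ℝ)⁻¹ F
  have hH : #H ≤ k ^ 2 * C := by
    have h := card_heavy_mul_le (η := (C : ℝ)⁻¹) hF hne
    rw [← div_eq_mul_inv, div_le_iff₀ hC'] at h
    exact_mod_cast h
  have hcount : #{A ∈ F | t < #(A ∩ H)} ≤
      (k ^ 2 * C) ^ (t + 1) * (n - (t + 1)).choose (k - (t + 1)) := by
    refine (card_le_card_mul_choose ((filter_subset _ F).trans hF)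
      (powersetCard_mono heavy_subset : H.powersetCard (t + 1) ⊆ _) htk fun A hA =>
        exists_mem_powersetCard_subset (mem_filter.1 hA).2).trans ?_
    rw [card_powersetCard]
    gcongr
    exact (Nat.choose_le_pow _ _).trans (Nat.pow_le_pow_left hH _)
  have hratio := choose_pred_succ_mul (m := n - t) (j := k - (t + 1)) (by
    have : 0 < k ^ (2 * t + 4) * C ^ (t + 3) := by positivity
    lia)
  rw [show k - (t + 1) + 1 = k - t by lia, Nat.sub_sub] at hratio
  have hscale : C * k * #{A ∈ F | t < #(A ∩ H)} ≤ #F := by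
    refine Nat.le_of_mul_le_mul_left ?_ (show 0 < k * C by positivity)
    calc k * C * (C * k * #{A ∈ F | t < #(A ∩ H)})
        ≤ k * C * (C * k * ((k ^ 2 * C) ^ (t + 1) * (n - (t + 1)).choose (k - (t + 1)))) := by
          gcongr
      _ = k ^ (2 * t + 4) * C ^ (t + 3) * (n - (t + 1)).choose (k - (t + 1)) := by ring
      _ ≤ (n - t) * (n - (t + 1)).choose (k - (t + 1)) := by gcongr; lia
      _ ≤ k * (C * #F) := hratio.trans_le (Nat.mul_le_mul (Nat.sub_le k t) hM)
      _ = k * C * #F := by ring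
  rw [inv_mul_eq_div, le_div_iff₀' hC', ← mul_assoc]
  exact_mod_cast hscale

theorem mul_sq_le_of_le_mul_add {r δ N M m c : ℝ} (hr : 0 ≤ r) (hδ : δ ≤ 1) (hN : 0 ≤ N)
    (hM0 : 0 ≤ M) (hM : M ≤ r * N + m) (hm : m ≤ δ * N)
    (hc : c * (r + 1) ^ 3 = (r + 1) ^ 2 + r * (1 - δ) ^ 2) :
    c * M ^ 2 ≤ r * N ^ 2 + m ^ 2 := by
  have hMsq : M ^ 2 ≤ (r * N + m) ^ 2 := by gcongr
  have hgap : ((1 - δ) * M) ^ 2 ≤ ((r + 1) * (N - m)) ^ 2 := by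
    have : 0 ≤ 1 - δ := by linarith
    have hMN : M ≤ (r + 1) * N := by nlinarith
    refine pow_le_pow_left₀ (by positivity) ?_ 2
    calc (1 - δ) * M ≤ (1 - δ) * ((r + 1) * N) := by gcongr
      _ = (r + 1) * (N - δ * N) := by ring
      _ ≤ (r + 1) * (N - m) := by gcongr
  refine le_of_mul_le_mul_left ?_ (show (0 : ℝ) < (r + 1) ^ 3 by positivity)
  calc (r + 1) ^ 3 * (c * M ^ 2) = (r + 1) ^ 2 * M ^ 2 + r * ((1 - δ) * M) ^ 2 := by
        rw [← mul_assoc, mul_comm _ c, hc]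
        ring
    _ ≤ (r + 1) ^ 2 * (r * N + m) ^ 2 + r * ((r + 1) * (N - m)) ^ 2 := by gcongr
    _ = (r + 1) ^ 3 * (r * N ^ 2 + m ^ 2) := by ring

theorem le_totalInt_of_isMax (ht : 1 ≤ t) (htk : t ≤ k) (hn : t + r ≤ n) (hδ0 : 0 ≤ δ)
    (hδ1 : δ ≤ 1) (hcard : (#F : ℝ) = #(lexFamily n k t r) + δ * (n - (t + r)).choose (k - t))
    (hopt : ∀ G ⊆ (Icc 1 n).powersetCard k, #G = #F → totalInt G ≤ totalInt F) {c : ℝ}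
    (hc : c * (r + 1) ^ 3 = (r + 1) ^ 2 + r * (1 - δ) ^ 2) :
    (t - 1 + c) * (#F : ℝ) ^ 2 ≤ totalInt F := by
  have hL : (#(lexFamily n k t r) : ℝ) ≤ r * (n - t).choose (k - t) := by
    exact_mod_cast card_lexFamily_le_mul_choose ht htk (by lia)
  have hchoose : ((n - (t + r)).choose (k - t) : ℝ) ≤ (n - t).choose (k - t) := by
    exact_mod_cast Nat.choose_le_choose _ (by lia)
  have hlower : #(lexFamily n k t r) ≤ #F := by
    rify
    rw [hcard]
    exact le_add_of_nonneg_right (by positivity)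
  have hupper : #F ≤ #(lexFamily n k t r) + (n - (t + r)).choose (k - t) := by
    rify
    rw [hcard]
    gcongr
    exact mul_le_of_le_one_left (Nat.cast_nonneg _) hδ1
  obtain ⟨G, hG, hGF, hGI⟩ := exists_le_totalInt_of_card ht htk hn hlower hupper
  have hFI := hGI.trans (hopt G hG hGF)
  rify [ht, hlower] at hFI
  have h := mul_sq_le_of_le_mul_add (m := #F - #(lexFamily n k t r)) r.cast_nonneg hδ1
    (Nat.cast_nonneg ((n - t).choose (k - t))) (Nat.cast_nonneg #F) (by linarith)
    (by rw [hcard, add_sub_cancel_left]; gcongr) hc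
  linarith

theorem choose_le_mul_card (ht : 1 ≤ t) (htk : t ≤ k) (hn : t + r ≤ n) (hδC : 1 ≤ δ * C)
    (hδ1 : δ ≤ 1) (hcard : (#F : ℝ) = #(lexFamily n k t r) + δ * (n - (t + r)).choose (k - t)) :
    (n - t).choose (k - t) ≤ C * #F := by
  have hδ0 : 0 < δ := pos_of_mul_pos_left (by linarith) C.cast_nonneg
  have hC : (1 : ℝ) ≤ C := hδC.trans (mul_le_of_le_one_left C.cast_nonneg hδ1)
  rify
  rcases Nat.eq_zero_or_pos r with rfl | hr
  · have : (0 : ℝ) ≤ #(lexFamily n k t 0) := Nat.cast_nonneg _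
    have h : (n - t).choose (k - t) * 1 ≤ (n - t).choose (k - t) * (δ * C) := by gcongr
    rw [hcard, add_zero]
    nlinarith
  · have hL : ((n - t).choose (k - t) : ℝ) ≤ #(lexFamily n k t r) := by
      exact_mod_cast choose_le_card_lexFamily ht htk hr (by lia)
    have hF : (#(lexFamily n k t r) : ℝ) ≤ #F := by
      rw [hcard]
      exact le_add_of_nonneg_right (by positivity)
    exact (hL.trans hF).trans (le_mul_of_one_le_left (Nat.cast_nonneg _) hC)

theorem le_add_one_of_card_le (ht : 1 ≤ t) (htk : t < k) (hkn : k ≤ n) (htr : t + r ≤ n)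
    (hn : C * (r * (k - t)) ≤ n - t) (hδ0 : 0 ≤ δ) (hδ1 : δ ≤ 1)
    (hcard : (#F : ℝ) = #(lexFamily n k t r) + δ * (n - (t + r)).choose (k - t))
    (hF : #F ≤ r * (n - t).choose (k - t)) : δ * C ≤ r + 1 := by
  have hN : 0 < (n - t).choose (k - t) := Nat.choose_pos (by lia)
  have hdrop : C * (n - t).choose (k - t) ≤
      C * (n - (t + r)).choose (k - t) + (n - t).choose (k - t) := by
    refine Nat.le_of_mul_le_mul_left ?_ (by lia : 0 < n - t)
    have h := mul_choose_le_mul_choose_sub (n - t) r (k - t)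
    rw [Nat.sub_sub] at h
    nlinarith
  have hL : (r * (n - (t + r)).choose (k - t) : ℝ) ≤ #(lexFamily n k t r) := by
    exact_mod_cast mul_choose_le_card_lexFamily ht htk.le (by lia)
  rify at hN hdrop hF
  have hbound : (r + δ) * (C * (n - t).choose (k - t)) ≤
      (r + δ) * (C * (n - (t + r)).choose (k - t) + (n - t).choose (k - t)) := by gcongr
  have hcount : C * ((r + δ) * (n - (t + r)).choose (k - t)) ≤ C * (r * (n - t).choose (k - t)) :=
    mul_le_mul_of_nonneg_left (by linarith) C.cast_nonneg
  have hδC : δ * C ≤ r + δ := le_of_mul_le_mul_right (by linarith) hN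
  linarith

theorem twentyfour_mul_le (hk : 2 ≤ k) (hC : 6 * k ^ 2 * (r + 1) ≤ C) : 24 * (r + 1) ≤ C := by
  have hk2 : 2 ^ 2 ≤ k ^ 2 := Nat.pow_le_pow_left hk 2
  exact hC.trans' (by gcongr; lia)

theorem five_mul_inv_lt {c : ℝ} (hC : 24 * (r + 1) ≤ C)
    (hc : c * (r + 1) ^ 3 = (r + 1) ^ 2 + r * (1 - δ) ^ 2) : 5 * (C : ℝ)⁻¹ < c := by
  have hC0 : (0 : ℝ) < C := by exact_mod_cast (by lia : 0 < C)
  have hC' : (24 * (r + 1) : ℝ) ≤ C := by exact_mod_cast hC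
  refine lt_of_mul_lt_mul_right ?_ (show (0 : ℝ) ≤ (r + 1) ^ 3 by positivity)
  calc 5 * (C : ℝ)⁻¹ * (r + 1) ^ 3 = 5 * (r + 1) / C * (r + 1 : ℝ) ^ 2 := by ring
    _ < 1 * (r + 1 : ℝ) ^ 2 := by
      gcongr
      rw [div_lt_one hC0]
      linarith
    _ ≤ c * (r + 1) ^ 3 := by
      rw [hc, one_mul]
      exact le_add_of_nonneg_right (by positivity)

theorem exists_core_of_isMax (ht : 2 ≤ t) (htk : t < k) (hC : 6 * k ^ 2 * (r + 1) ≤ C)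
    (hn : k ^ (2 * t + 4) * C ^ (t + 3) + t ≤ n) (htr : t + r ≤ n) (htn : t < n)
    (hδC : 1 ≤ δ * C) (hδ1 : δ ≤ 1) (hF : F ⊆ (Icc 1 n).powersetCard k) (hne : F.Nonempty)
    (hcard : (#F : ℝ) = #(lexFamily n k t r) + δ * (n - (t + r)).choose (k - t))
    (hopt : ∀ G ⊆ (Icc 1 n).powersetCard k, #G = #F → totalInt G ≤ totalInt F)
    (hnostar : ¬∃ Y ∈ (Icc 1 n).powersetCard t, fullStar n k Y ⊆ F)
    (hno : ∀ x ∈ Icc 1 n, ∃ A ∈ F, x ∉ A) :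
    ((t - r) * (r + 1) ^ 2 + (t + 1) * (r * (1 - δ) ^ 2)) * C ≤ 6 * t * (r + 1) ^ 3 ∧
      ∃ T ∈ (Icc 1 n).powersetCard (t + 1), ∀ A ∈ F, t ≤ #(A ∩ T) := by
  have hCr : 24 * (r + 1) ≤ C := twentyfour_mul_le (by lia) hC
  have hC0 : (0 : ℝ) < C := by exact_mod_cast (by lia : 0 < C)
  have ht' : (2 : ℝ) ≤ t := by exact_mod_cast ht
  obtain ⟨c, hc⟩ : ∃ c : ℝ, c * (r + 1) ^ 3 = (r + 1) ^ 2 + r * (1 - δ) ^ 2 :=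
    ⟨_, div_mul_cancel₀ _ (by positivity)⟩
  obtain ⟨A, hA, hmin⟩ := exists_min_image F (setInt F) hne
  obtain ⟨hsmall, hcore⟩ := exists_core hF (by positivity) (five_mul_inv_lt hCr hc)
    (by lia) ht
    (by rwa [Nat.card_Icc, Nat.add_sub_cancel]) hne
    (mul_card_filter_lt_card_inter_heavy_le hF hne htk (by lia) hn
      (choose_le_mul_card (by lia) htk.le htr hδC hδ1 hcard))
    (fun B hB => Nat.cast_le.2 (hmin B hB))
    (fun Y hY => Nat.cast_le.2
      (setInt_le_setInt_of_not_exists_fullStar_subset hF hopt hnostar hY hA))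
    (le_totalInt_of_isMax (by lia) htk.le htr (pos_of_mul_pos_left (by linarith) hC0.le).le hδ1
      hcard hopt hc) hno
  refine ⟨?_, hcore⟩
  have hr : (0 : ℝ) ≤ (2 * t - 3) * (r + 1) ^ 3 := mul_nonneg (by linarith) (by positivity)
  have hscale : (t + 1) * (c * (r + 1) ^ 3) * C ≤ (C + (4 * t + 3)) * (r + 1 : ℝ) ^ 3 := by
    calc (t + 1) * (c * (r + 1) ^ 3) * C = (t + 1) * c * ((r + 1) ^ 3 * C) := by ring
      _ ≤ (1 + (4 * t + 3) * (C : ℝ)⁻¹) * ((r + 1) ^ 3 * C) := by gcongr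
      _ = _ := by field_simp
  rw [hc] at hscale
  linarith

theorem sum_Icc_choose_eq_card_lexFamily (ht : 1 ≤ t) (htk : t ≤ k) (hn : t + r ≤ n + 1) :
    ∑ i ∈ Icc t (t + r - 1), ((n - i).choose (k - t) : ℝ) = #(lexFamily n k t r) := by
  rw [card_lexFamily ht htk hn, Nat.cast_sum]
  refine sum_congr (ext fun i => ?_) fun _ _ => rfl
  rw [mem_Icc, mem_Ico]
  lia

theorem card_eq_card_lexFamily_succ (ht : 1 ≤ t) (htk : t ≤ k) (hn : t + r ≤ n)
    (hcard : (#F : ℝ) = #(lexFamily n k t r) + 1 * (n - (t + r)).choose (k - t)) :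
    #F = #(lexFamily n k t (r + 1)) := by
  rify
  rw [hcard, one_mul, ← card_lexFamily_succ_sdiff ht htk hn, add_comm]
  exact_mod_cast card_sdiff_add_card_eq_card lexFamily_subset_succ

theorem le_of_excess_mul_le (htk : t < k) (hC : 6 * k ^ 2 * (r + 1) ≤ C)
    (h : ((t - r) * (r + 1) ^ 2 + (t + 1) * (r * (1 - δ) ^ 2)) * C ≤ 6 * t * (r + 1 : ℝ) ^ 3) :
    t ≤ r := by
  by_contra! hrt
  have hgap : (1 : ℝ) ≤ t - r := by
    rw [le_sub_iff_add_le']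
    exact_mod_cast hrt
  have hCt : (6 * t * (r + 1) : ℝ) < C := by
    exact_mod_cast show 6 * t * (r + 1) < C from hC.trans_lt' (by gcongr; nlinarith)
  have hscale : (r + 1 : ℝ) ^ 2 * C ≤ (r + 1 : ℝ) ^ 2 * (6 * t * (r + 1)) := by
    calc (r + 1 : ℝ) ^ 2 * C = (1 * (r + 1) ^ 2 + 0) * C := by ring
      _ ≤ ((t - r) * (r + 1) ^ 2 + (t + 1) * (r * (1 - δ) ^ 2)) * C := by gcongr; positivity
      _ ≤ 6 * t * (r + 1 : ℝ) ^ 3 := h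
      _ = _ := by ring
  exact hCt.not_ge (le_of_mul_le_mul_left hscale (by positivity))

theorem sq_mul_le_of_excess_mul_le (ht : 1 ≤ t)
    (h : ((t - t) * (t + 1) ^ 2 + (t + 1) * (t * (1 - δ) ^ 2)) * C ≤ 6 * t * (t + 1 : ℝ) ^ 3) :
    (1 - δ) ^ 2 * C ≤ 6 * (t + 1 : ℝ) ^ 2 := by
  have : (0 : ℝ) < t := by exact_mod_cast ht
  refine le_of_mul_le_mul_left ?_ (show (0 : ℝ) < (t + 1) * t by positivity)
  linarith

theorem sq_mul_pow_add_le (ht : 1 ≤ t) (htk : t ≤ k) (hC : 10 ≤ C)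
    (hn : k ^ (2 * t + 4) * C ^ (t + 3) + t ≤ n) : 100 * k ^ 2 * t ^ 4 + t ≤ n := by
  refine hn.trans' ?_
  calc 100 * k ^ 2 * t ^ 4 + t ≤ 10 ^ 2 * k ^ 2 * k ^ 4 + t := by gcongr; norm_num
    _ = k ^ 6 * 10 ^ 2 + t := by ring
    _ ≤ k ^ 6 * C ^ 2 + t := by gcongr
    _ ≤ k ^ (2 * t + 4) * C ^ (t + 3) + t := by gcongr <;> lia

theorem mul_mul_add_le (hk : 0 < k) (hrC : r + 1 ≤ C)
    (hn : k ^ (2 * t + 4) * C ^ (t + 3) + t ≤ n) : C * ((r + 1) * k) + t ≤ n := by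
  refine hn.trans' ?_
  calc C * ((r + 1) * k) + t ≤ C * (C * k) + t := by gcongr
    _ = k ^ 1 * C ^ 2 + t := by ring
    _ ≤ k ^ (2 * t + 4) * C ^ (t + 3) + t := by gcongr <;> lia

end Optimal

theorem stmt14_general (k r t n C : ℕ) (ht : 2 ≤ t) (hC : 6 * k ^ 2 * (r + 1) ≤ C)
    (hn : k ^ (2 * t + 4) * C ^ (t + 3) + t ≤ n) (δ : ℝ) (hδ : (r : ℝ) + 1 < δ * C) (hδ1 : δ ≤ 1)
    (hδt : r = t → δ = 1 ∨ 6 * ((t : ℝ) + 1) ^ 2 < (1 - δ) ^ 2 * C)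
    (F : Finset (Finset ℕ)) (hF : F ⊆ (Icc 1 n).powersetCard k)
    (hcard : (F.card : ℝ) =
      (∑ i ∈ Icc t (t + r - 1), ((n - i).choose (k - t) : ℝ)) +
        δ * ((n - (t + r)).choose (k - t) : ℝ))
    (hopt : ∀ G ⊆ (Icc 1 n).powersetCard k, G.card = F.card → totalInt G ≤ totalInt F)
    (hnostar : ¬ ∃ Y ∈ (Icc 1 n).powersetCard t, fullStar n k Y ⊆ F) :
    ∃ x ∈ Icc 1 n, ∀ A ∈ F, x ∈ A := by
  by_contra! hno
  obtain ⟨A, hA, -⟩ := hno 1 (mem_Icc.2 ⟨le_rfl, by lia⟩)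
  have hne : F.Nonempty := ⟨A, hA⟩
  have htk : t < k := lt_of_not_exists_fullStar_subset hF hne (by lia) hnostar
  have hCr : 24 * (r + 1) ≤ C := twentyfour_mul_le (by lia) hC
  have hCn : C * ((r + 1) * k) + t ≤ n := mul_mul_add_le (by lia) (by lia) hn
  have hrk : r + k ≤ C * ((r + 1) * k) := by
    calc r + k ≤ r * k + k := Nat.add_le_add_right (Nat.le_mul_of_pos_right r (by lia)) k
      _ = 1 * ((r + 1) * k) := by ring
      _ ≤ C * ((r + 1) * k) := by gcongr; lia
  rw [sum_Icc_choose_eq_card_lexFamily (by lia) htk.le (by lia)] at hcard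
  obtain ⟨hexcess, T, hT, hFT⟩ := exists_core_of_isMax ht htk hC hn (by lia) (by lia)
    (by linarith) hδ1 hF hne hcard hopt hnostar hno
  rcases (le_of_excess_mul_le htk hC hexcess).eq_or_lt' with rfl | htr
  · rcases hδt rfl with rfl | hgap
    · have hcard' := card_eq_card_lexFamily_succ (by lia) htk.le (by lia) hcard
      exact (totalInt_lt_totalInt_lexFamily ht htk (sq_mul_pow_add_le (by lia) htk.le (by lia) hn)
        hF hT hFT hcard').not_ge (hopt _ lexFamily_subset hcard'.symm)
    · exact hgap.not_ge (sq_mul_le_of_excess_mul_le (by lia) hexcess)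
  · have hsize : #F ≤ r * (n - t).choose (k - t) :=
      (card_le_of_le_card_inter hF htk.le hT hFT).trans (Nat.mul_le_mul_right _ htr)
    have hCr' : C * (r * (k - t)) ≤ C * ((r + 1) * k) := by gcongr <;> lia
    have hδ0 : 0 ≤ δ := nonneg_of_mul_nonneg_left (b := (C : ℝ)) (by linarith) (by norm_cast; lia)
    exact hδ.not_ge (le_add_one_of_card_le (by lia) htk (by lia) (by lia) (by lia) hδ0 hδ1 hcard
      hsize)

section Constants

variable {k t r n : ℕ} {δ : ℝ}

theorem Cconst_one : Cconst k t r 1 = 10 ^ 6 * (k ^ 2 * t ^ 4 * (r + 1) ^ 7) := by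
  simp only [Cconst]
  norm_num

theorem Cconst_one_sq_le (hk : 1 ≤ k) (ht : 2 ≤ t) : Cconst k t r 1 ^ 2 ≤ Cconst k t r t := by
  have hexp : 2 ^ 1 ≤ 2 ^ (t - 1) := Nat.pow_le_pow_right two_pos (by lia)
  have hexp' : 2 ^ 4 ≤ 2 ^ (t + 2) := Nat.pow_le_pow_right two_pos (by lia)
  have hbase : 1 ≤ k ^ 2 * t ^ 4 * (r + 1) ^ 7 :=
    Nat.one_le_iff_ne_zero.2 (by positivity)
  calc Cconst k t r 1 ^ 2 = 1 * 10 ^ 12 * (k ^ 2 * t ^ 4 * (r + 1) ^ 7) ^ 2 := by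
        rw [Cconst_one]
        ring
    _ ≤ Cconst k t r t := by
        rw [Cconst]
        gcongr
        · exact Nat.one_le_two_pow
        · norm_num
        · lia
        · exact hexp

theorem six_mul_sq_mul_le_Cconst_one (ht : 1 ≤ t) : 6 * k ^ 2 * (r + 1) ≤ Cconst k t r 1 := by
  calc 6 * k ^ 2 * (r + 1) = 6 * (k ^ 2 * 1 ^ 4 * (r + 1) ^ 1) := by ring
    _ ≤ 10 ^ 6 * (k ^ 2 * t ^ 4 * (r + 1) ^ 7) := by gcongr <;> lia
    _ = Cconst k t r 1 := Cconst_one.symm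

theorem sq_le_Cconst_one (ht : 1 ≤ t) : k ^ 2 ≤ Cconst k t r 1 :=
  (six_mul_sq_mul_le_Cconst_one ht).trans' (by nlinarith [sq_nonneg k])

theorem pow_mul_Cconst_one_pow_add_le (hk : 1 ≤ k) (ht : 2 ≤ t) :
    k ^ (2 * t + 4) * Cconst k t r 1 ^ (t + 3) + t ≤
      Cconst k t r 1 * (3 * t * Cconst k t r t) ^ (2 * t) := by
  have hC : 1 ≤ Cconst k t r 1 := (sq_le_Cconst_one (by lia)).trans' (Nat.one_le_pow _ _ hk)
  have ht' : t + 1 ≤ (3 * t) ^ (2 * t) := (Nat.le_self_pow (by lia) _).trans' (by lia)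
  have hpow : 1 ≤ Cconst k t r 1 ^ (4 * t + 1) := Nat.one_le_pow _ _ hC
  calc k ^ (2 * t + 4) * Cconst k t r 1 ^ (t + 3) + t
      = (k ^ 2) ^ (t + 2) * Cconst k t r 1 ^ (t + 3) + t := by rw [← pow_mul]; ring
    _ ≤ Cconst k t r 1 ^ (t + 2) * Cconst k t r 1 ^ (t + 3) + t := by
        gcongr
        exact sq_le_Cconst_one (by lia)
    _ = Cconst k t r 1 ^ (2 * t + 5) + t := by ring
    _ ≤ Cconst k t r 1 ^ (4 * t + 1) + t :=
        Nat.add_le_add_right (Nat.pow_le_pow_right hC (by lia)) t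
    _ ≤ (t + 1) * Cconst k t r 1 ^ (4 * t + 1) := by nlinarith
    _ ≤ (3 * t) ^ (2 * t) * Cconst k t r 1 ^ (4 * t + 1) := by gcongr
    _ = Cconst k t r 1 * (3 * t * Cconst k t r 1 ^ 2) ^ (2 * t) := by
        rw [mul_pow _ (_ ^ 2), ← pow_mul]
        ring
    _ ≤ Cconst k t r 1 * (3 * t * Cconst k t r t) ^ (2 * t) := by
        gcongr
        exact Cconst_one_sq_le hk ht

theorem add_one_lt_Cconst_one (hk : 1 ≤ k) (ht : 1 ≤ t) : r + 1 < Cconst k t r 1 :=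
  (six_mul_sq_mul_le_Cconst_one ht).trans_lt' (by nlinarith [Nat.one_le_pow 2 k hk])

theorem add_one_lt_window (hk : 1 ≤ k) (ht : 1 ≤ t) :
    r + 1 < 60 * k ^ 2 * (r + 1) ^ 6 * t ^ 4 := by
  calc r + 1 < 60 * 1 ^ 2 * (r + 1) ^ 1 * 1 ^ 4 := by lia
    _ ≤ 60 * k ^ 2 * (r + 1) ^ 6 * t ^ 4 := by gcongr <;> lia

theorem six_mul_sq_mul_Cconst_one_lt (hk : 2 ≤ k) (ht : 2 ≤ t) (hr : 2 ≤ r) :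
    6 * (r + 1) ^ 2 * Cconst k t r 1 < (60 * k ^ 2 * (r + 1) ^ 6 * t ^ 4) ^ 2 := by
  calc 6 * (r + 1) ^ 2 * Cconst k t r 1
      = 6 * 10 ^ 6 * (k ^ 2 * t ^ 4 * (r + 1) ^ 9) := by rw [Cconst_one]; ring
    _ < 60 ^ 2 * 2 ^ 2 * 2 ^ 4 * (2 + 1) ^ 3 * (k ^ 2 * t ^ 4 * (r + 1) ^ 9) :=
        Nat.mul_lt_mul_of_pos_right (by norm_num) (by positivity)
    _ ≤ 60 ^ 2 * k ^ 2 * t ^ 4 * (r + 1) ^ 3 * (k ^ 2 * t ^ 4 * (r + 1) ^ 9) := by gcongr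
    _ = (60 * k ^ 2 * (r + 1) ^ 6 * t ^ 4) ^ 2 := by ring

theorem mul_Cconst_one_bounds_of_window (hk : 2 ≤ k) (ht : 2 ≤ t)
    (hδ : (60 * (k : ℝ) ^ 2 * ((r : ℝ) + 1) ^ 6 * (t : ℝ) ^ 4 / (Cconst k t r 1 : ℝ) ≤ δ ∧
      δ ≤ 1 - 60 * (k : ℝ) ^ 2 * ((r : ℝ) + 1) ^ 6 * (t : ℝ) ^ 4 / (Cconst k t r 1 : ℝ)) ∨ δ = 1) :
    (r : ℝ) + 1 < δ * Cconst k t r 1 ∧ δ ≤ 1 ∧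
      (r = t → δ = 1 ∨ 6 * ((t : ℝ) + 1) ^ 2 < (1 - δ) ^ 2 * Cconst k t r 1) := by
  have hrC : (r + 1 : ℝ) < Cconst k t r 1 := by
    exact_mod_cast add_one_lt_Cconst_one (by lia) (by lia)
  have hC : (0 : ℝ) < Cconst k t r 1 := hrC.trans' (by positivity)
  rcases hδ with ⟨hlow, hupp⟩ | rfl
  · have hrW : (r + 1 : ℝ) < 60 * k ^ 2 * (r + 1) ^ 6 * t ^ 4 := by
      exact_mod_cast add_one_lt_window (by lia) (by lia)
    refine ⟨hrW.trans_le ((div_le_iff₀ hC).1 hlow), hupp.trans (sub_le_self 1 (by positivity)), ?_⟩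
    rintro rfl
    right
    have hsq : (6 * (r + 1) ^ 2 * Cconst k r r 1 : ℝ) < (60 * k ^ 2 * (r + 1) ^ 6 * r ^ 4) ^ 2 := by
      exact_mod_cast six_mul_sq_mul_Cconst_one_lt hk ht ht
    have hgap : (60 * k ^ 2 * (r + 1) ^ 6 * r ^ 4 : ℝ) ≤ (1 - δ) * Cconst k r r 1 :=
      (div_le_iff₀ hC).1 (by linarith)
    refine lt_of_mul_lt_mul_right ?_ hC.le
    calc (6 * (r + 1) ^ 2 * Cconst k r r 1 : ℝ) < (60 * k ^ 2 * (r + 1) ^ 6 * r ^ 4) ^ 2 := hsq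
      _ ≤ ((1 - δ) * Cconst k r r 1) ^ 2 := by gcongr
      _ = (1 - δ) ^ 2 * Cconst k r r 1 * Cconst k r r 1 := by ring
  · exact ⟨by rwa [one_mul], le_rfl, fun _ => Or.inl rfl⟩

end Constants

/-- **Lemma.** If an optimal family `F` (of the size in the main theorem, `t ≥ 2`) contains
no full `t`-star, then all members of `F` share a common element. -/
theorem stmt14 (k r t n : ℕ) (hk : 2 ≤ k) (ht : 2 ≤ t)
    (hn : Cconst k t r 1 * (3 * t * Cconst k t r t) ^ (2 * t) ≤ n)
    (δ : ℝ)
    (hδ : (60 * (k : ℝ) ^ 2 * ((r : ℝ) + 1) ^ 6 * (t : ℝ) ^ 4 / (Cconst k t r 1 : ℝ) ≤ δ ∧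
           δ ≤ 1 - 60 * (k : ℝ) ^ 2 * ((r : ℝ) + 1) ^ 6 * (t : ℝ) ^ 4 / (Cconst k t r 1 : ℝ)) ∨
          δ = 1)
    (F : Finset (Finset ℕ)) (hF : F ⊆ (Icc 1 n).powersetCard k)
    (hcard : (F.card : ℝ) =
      (∑ i ∈ Icc t (t + r - 1), ((n - i).choose (k - t) : ℝ)) +
        δ * ((n - (t + r)).choose (k - t) : ℝ))
    (hopt : ∀ G ⊆ (Icc 1 n).powersetCard k, G.card = F.card → totalInt G ≤ totalInt F)
    (hnostar : ¬ ∃ Y ∈ (Icc 1 n).powersetCard t, fullStar n k Y ⊆ F) :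
    ∃ x ∈ Icc 1 n, ∀ A ∈ F, x ∈ A := by
  obtain ⟨hδr, hδ1, hδt⟩ := mul_Cconst_one_bounds_of_window hk ht hδ
  exact stmt14_general k r t n _ ht (six_mul_sq_mul_le_Cconst_one (by lia))
    ((pow_mul_Cconst_one_pow_add_le (by lia) ht).trans hn) δ hδr hδ1 hδt F hF hcard hopt hnostar
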